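/- arXiv:math/0607183 — 3 statements merged into one kernel-verified Lean document; each statement's English description precedes it below -/
import Mathlib

section
/- Let a, b, c ≥ 0, let α_1, …, α_{b+c} be pairwise distinct complex numbers, and let β_1, …, β_{a+c}, γ_1, …, γ_{a+b} be complex numbers with α_i ≠ β_j for all i, j. Then Φ_{a,b,c}(α; β; γ) = [ ∏_{(i,j) : 1 ≤ i ≤ b+c, 1 ≤ j ≤ a+c, c < i+j ≤ a+b+c+1} (α_i − β_j) ] · det_{1 ≤ ℓ, m ≤ c} M, where the c × c matrix M has entries M_{ℓ,m} = Σ_{i=ℓ}^{b+m} [ ∏_{k=1}^{a+b} (α_i − γ_k) ] / [ ∏_{i' = ℓ, i' ≠ i}^{b+m} (α_i − α_{i'}) · ∏_{j = c+1−ℓ}^{a+c+1−m} (α_i − β_j) ] (empty sums are 0, empty products are 1, and for c = 0 the determinant of the empty matrix is 1). (This is the determinant formula, Eq. (3.6) of the paper, obtained from the Lindström–Gessel–Viennot evaluation of the plane-partition partition function.) -/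
/-- Eq. (2.6) of the paper: the explicit formula for the component of the O(1) loop model
ground state corresponding to three series of nested arches of sizes `a`, `b`, `c`. -/
noncomputable def Phi (a b c : ℕ) (α : Fin (b + c) → ℂ) (β : Fin (a + c) → ℂ)
    (γ : Fin (a + b) → ℂ) : ℂ :=
  ∑ I ∈ Finset.powersetCard c (Finset.univ : Finset (Fin (b + c))),
    ((∏ i ∈ Iᶜ, ∏ j, (α i - β j)) * ∏ i ∈ I, ∏ k, (α i - γ k)) /
      ∏ i ∈ I, ∏ j ∈ Iᶜ, (α i - α j)

open Finset Matrix Polynomial in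
/-- The **Cauchy–Binet formula**, with the product of the two minors indexed by a `c`-element set
`I` given as `g I`. -/
theorem Matrix.det_mul_eq_sum_powersetCard {R n : Type*} [CommRing R] [Fintype n] [LinearOrder n]
    {c : ℕ} (A : Matrix (Fin c) n R) (B : Matrix n (Fin c) R) (g : Finset n → R)
    (hg : ∀ e : Fin c → n, Function.Injective e →
      g (univ.image e) = (A.submatrix id e).det * (B.submatrix e id).det) :
    (A * B).det = ∑ I ∈ powersetCard c univ, g I := by
  have expand : (A * B).det = ∑ f : Fin c → n, (∏ l, A l (f l)) * (B.submatrix f id).det := by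
    have h := (detRowAlternating (R := R) (n := Fin c)).toMultilinearMap.map_sum
      (fun (l : Fin c) (i : n) => A l i • B i)
    have h2 : (A * B) = fun l => ∑ i, A l i • B i := by
      ext l m
      simp [Matrix.mul_apply, Finset.sum_apply]
    rw [h2]
    refine h.trans (sum_congr rfl fun f _ => ?_)
    exact (detRowAlternating (R := R) (n := Fin c)).toMultilinearMap.map_smul_univ
      (fun l => A l (f l)) (fun l => B (f l))
  rw [expand, ← sum_filter_of_ne (p := Function.Injective)]
  · rw [← sum_fiberwise_of_maps_to (t := powersetCard c univ) (g := fun f => univ.image f)]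
    · refine sum_congr rfl fun I hI => ?_
      have hc : I.card = c := (mem_powersetCard.1 hI).2
      obtain ⟨e, he, rfl⟩ : ∃ e : Fin c → n, Function.Injective e ∧ univ.image e = I :=
        ⟨I.orderEmbOfFin hc, (I.orderEmbOfFin hc).injective, I.image_orderEmbOfFin_univ hc⟩
      rw [hg e he, ← det_transpose (A.submatrix id e), det_apply', sum_mul]
      symm
      refine sum_bij (fun (σ : Equiv.Perm (Fin c)) _ => e ∘ σ) ?_ ?_ ?_ ?_
      · intro σ _
        simp only [mem_filter, mem_univ, true_and]
        refine ⟨he.comp σ.injective, ?_⟩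
        rw [← image_image, image_univ_of_surjective σ.surjective]
      · intro σ _ τ _ h
        exact Equiv.ext fun i => he (congrFun h i)
      · intro f hf
        simp only [mem_filter, mem_univ, true_and] at hf
        have hs : ∀ l, ∃ k, e k = f l := fun l => by
          have : f l ∈ univ.image e := hf.2 ▸ mem_image_of_mem f (mem_univ l)
          simpa using this
        choose s hs using hs
        have hsi : Function.Injective s := fun x y h => hf.1 (by rw [← hs x, ← hs y, h])
        exact ⟨Equiv.ofBijective s (Finite.injective_iff_bijective.1 hsi), mem_univ _,
          funext hs⟩
      · intro σ _
        have : B.submatrix (e ∘ σ) id = (B.submatrix e id).submatrix σ id := rfl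
        rw [this, det_permute]
        simp [mul_comm, mul_left_comm]
    · intro f hf
      simp only [mem_filter, mem_univ, true_and] at hf
      simp [mem_powersetCard, card_image_of_injective _ hf]
  · intro f _ hf
    by_contra hn
    obtain ⟨i, j, hij, hne⟩ : ∃ i j, f i = f j ∧ i ≠ j := by
      simpa [Function.Injective] using hn
    exact hf (by rw [det_zero_of_row_eq hne (by ext; simp [hij]), mul_zero])

open Finset Matrix Polynomial in
/-- The determinant of the mixed products `∏ (x - u i) * ∏ (x - v j)` is a multiple of the
Vandermonde determinant, with a factor independent of `x`. -/
theorem Matrix.det_prod_sub_mul_prod_sub {K : Type*} [Field K] {c : ℕ} (u v x : Fin c → K)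
    (hu : Function.Injective u) :
    (Matrix.of fun l k => (∏ i ∈ Iio l, (x k - u i)) * ∏ j ∈ Iio l.rev, (x k - v j)).det =
      (∏ l, ∏ j ∈ Iio l.rev, (u l - v j)) * (vandermonde x).det := by
  let p : Fin c → K[X] := fun l => (∏ i ∈ Iio l, (X - C (u i))) * ∏ j ∈ Iio l.rev, (X - C (v j))
  have hp : ∀ l, (p l).natDegree < c := fun l => by
    have h : (p l).natDegree ≤ _ := natDegree_mul_le
    rw [natDegree_prod_of_monic _ _ (fun _ _ => monic_X_sub_C _),
      natDegree_prod_of_monic _ _ (fun _ _ => monic_X_sub_C _)] at h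
    simp only [natDegree_X_sub_C, sum_const, Fin.card_Iio, Fin.val_rev, smul_eq_mul, mul_one] at h
    omega
  have key : ∀ y : Fin c → K,
      (Matrix.of fun l k => (∏ i ∈ Iio l, (y k - u i)) * ∏ j ∈ Iio l.rev, (y k - v j)).det =
        (Matrix.of fun k l : Fin c => (p l).coeff k).det * (vandermonde y).det := fun y => by
    rw [← det_transpose, mul_comm, ← det_mul]
    congr 1
    ext k l
    have : (p l).eval (y k) =
        (∏ i ∈ Iio l, (y k - u i)) * ∏ j ∈ Iio l.rev, (y k - v j) := by
      simp [p, eval_mul, eval_prod]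
    rw [transpose_apply, of_apply, ← this, eval_eq_sum_range' (hp l), sum_range, mul_apply]
    exact sum_congr rfl fun _ _ => mul_comm _ _
  have hV : (vandermonde u).det ≠ 0 := det_vandermonde_ne_zero_iff.2 hu
  have hT := key u
  rw [det_of_isUpperTriangular] at hT
  · rw [key x]
    congr 1
    refine mul_right_cancel₀ hV (hT.symm.trans ?_)
    simp only [of_apply, prod_mul_distrib]
    rw [mul_comm, det_vandermonde]
    congr 1
    exact prod_comm' (by simp)
  · intro l k hkl
    exact mul_eq_zero_of_left (prod_eq_zero (i := k) (mem_Iio.2 hkl) (sub_self _)) _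

open Finset Matrix in
theorem Matrix.det_vandermonde_mul_det_vandermonde_rev {R : Type*} [CommRing R] {c : ℕ}
    (x : Fin c → R) :
    (vandermonde x).det * (vandermonde (x ∘ Fin.rev)).det =
      ∏ i, ∏ j ∈ univ.erase i, (x i - x j) := by
  have h : ∀ i : Fin c, univ.erase i = (Iio i).disjUnion (Ioi i)
      (disjoint_left.2 fun j => by simp; intro h; exact h.le) := fun i => by
    ext j
    simp [lt_or_lt_iff_ne]
  simp only [h, prod_disjUnion, prod_mul_distrib, det_vandermonde]
  congr 1
  · exact prod_comm' (by simp)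
  · rw [← Equiv.prod_comp Fin.revPerm]
    have : ∀ i : Fin c, ∏ j ∈ Ioi (Fin.revPerm i),
        ((x ∘ Fin.rev) j - (x ∘ Fin.rev) (Fin.revPerm i)) = ∏ j ∈ Iio i, (x j - x i) := fun i => by
      refine prod_nbij' Fin.rev Fin.rev ?_ ?_ ?_ ?_ ?_
      · intro j; simp [Fin.rev_lt_iff]
      · intro j; simp
      · simp
      · simp
      · simp
    simp only [this]
    exact prod_comm' (by simp)

open Finset Polynomial in
theorem Lagrange.sum_eval_div_prod_sub_eq_zero {K ι : Type*} [Field K] [DecidableEq ι]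
    (s : Finset ι) (v : ι → K) (hv : Set.InjOn v s) (p : K[X]) (hp : p.natDegree + 1 < #s) :
    ∑ i ∈ s, p.eval (v i) / ∏ j ∈ s.erase i, (v i - v j) = 0 := by
  rw [← Lagrange.coeff_eq_sum hv]
  · exact coeff_eq_zero_of_natDegree_lt (by omega)
  · exact lt_of_le_of_lt degree_le_natDegree (by exact_mod_cast (by omega))

open Finset in
theorem Fin.prod_filter_val_lt {M : Type*} [CommMonoid M] {c N : ℕ} (h : c ≤ N) (t : Fin c)
    (f : Fin N → M) :
    ∏ i ∈ univ.filter (fun i : Fin N => i.1 < t.1), f i = ∏ k ∈ Iio t, f (Fin.castLE h k) := by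
  symm
  refine prod_bij (fun k _ => Fin.castLE h k) ?_ ?_ ?_ ?_
  · intro k; simp
  · intro k _ l _; simp
  · intro i hi
    simp only [mem_filter, mem_univ, true_and] at hi
    exact ⟨⟨i.1, by omega⟩, mem_Iio.2 hi, by ext; simp⟩
  · simp

open Finset in
theorem Fin.prod_filter_lt_val {M : Type*} [CommMonoid M] {c N : ℕ} (h : c ≤ N) (t : Fin c)
    (f : Fin N → M) :
    ∏ i ∈ univ.filter (fun i : Fin N => N - 1 - t.1 < i.1), f i =
      ∏ k ∈ Iio t, f (Fin.castLE h k).rev := by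
  rw [← Fin.prod_filter_val_lt h t (fun i => f i.rev)]
  refine prod_nbij' Fin.rev Fin.rev ?_ ?_ ?_ ?_ ?_
  · intro i; simp only [mem_filter, mem_univ, true_and, Fin.val_rev]; omega
  · intro i; simp only [mem_filter, mem_univ, true_and, Fin.val_rev]; omega
  · simp
  · simp
  · simp

open Finset in
theorem Fin.prod_Iio_rev_eq_prod_filter {R : Type*} [CommMonoid R] {c N M : ℕ} (hN : c ≤ N)
    (hM : c ≤ M) (f : Fin N × Fin M → R) :
    ∏ l : Fin c, ∏ k ∈ Iio l.rev, f (Fin.castLE hN l, Fin.castLE hM k) =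
      ∏ p ∈ univ.filter (fun p : Fin N × Fin M => p.1.1 + p.2.1 + 2 ≤ c), f p := by
  rw [prod_sigma']
  refine prod_bij (fun p _ => (Fin.castLE hN p.1, Fin.castLE hM p.2)) ?_ ?_ ?_ ?_
  · rintro ⟨l, k⟩
    simp only [mem_sigma, mem_univ, true_and, mem_Iio, mem_filter, Fin.lt_def, Fin.val_rev,
      Fin.val_castLE]
    omega
  · rintro ⟨l, k⟩ _ ⟨l', k'⟩ _
    simp
  · rintro ⟨i, j⟩ hp
    simp only [mem_filter, mem_univ, true_and] at hp
    refine ⟨⟨⟨i.1, by omega⟩, ⟨j.1, by omega⟩⟩, ?_, by simp⟩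
    simp only [mem_sigma, mem_univ, true_and, mem_Iio, Fin.lt_def, Fin.val_rev]
    omega
  · simp

open Finset in
theorem Fin.prod_Iio_rev_rev_eq_prod_filter {R : Type*} [CommMonoid R] {c N M : ℕ} (hN : c ≤ N)
    (hM : c ≤ M) (f : Fin N × Fin M → R) :
    ∏ l : Fin c, ∏ k ∈ Iio l.rev, f ((Fin.castLE hN l).rev, (Fin.castLE hM k).rev) =
      ∏ p ∈ univ.filter (fun p : Fin N × Fin M => N + M ≤ p.1.1 + p.2.1 + c), f p := by
  rw [Fin.prod_Iio_rev_eq_prod_filter hN hM (fun p => f (p.1.rev, p.2.rev))]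
  refine prod_nbij' (fun p => (p.1.rev, p.2.rev)) (fun p => (p.1.rev, p.2.rev)) ?_ ?_ ?_ ?_ ?_
  · intro p; simp only [mem_filter, mem_univ, true_and, Fin.val_rev]; omega
  · intro p; simp only [mem_filter, mem_univ, true_and, Fin.val_rev]; omega
  · simp
  · simp
  · simp

open Finset in
theorem prod_filter_mul_corner_prods {R : Type*} [CommMonoid R] (a b c : ℕ)
    (f : Fin (b + c) × Fin (a + c) → R) :
    (∏ p ∈ univ.filter (fun p : Fin (b + c) × Fin (a + c) =>
        c < p.1.1 + 1 + (p.2.1 + 1) ∧ p.1.1 + 1 + (p.2.1 + 1) ≤ a + b + c + 1), f p) *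
      (∏ p ∈ univ.filter (fun p : Fin (b + c) × Fin (a + c) => p.1.1 + p.2.1 + 2 ≤ c), f p) *
      (∏ p ∈ univ.filter (fun p : Fin (b + c) × Fin (a + c) =>
        b + c + (a + c) ≤ p.1.1 + p.2.1 + c), f p) = ∏ i, ∏ j, f (i, j) := by
  rw [← prod_union, ← prod_union, ← Fintype.prod_prod_type']
  · refine prod_congr ?_ fun _ _ => rfl
    ext p
    simp only [mem_union, mem_filter, mem_univ, true_and, iff_true]
    omega
  all_goals
    refine disjoint_left.2 fun p => ?_
    simp only [mem_union, mem_filter, mem_univ, true_and]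
    omega

open Finset Polynomial in
/-- The restricted sum over a window of nodes equals a sum over all nodes, in which the factors
outside the window have been moved to the numerator. -/
theorem sum_window_eq_sum_univ {K : Type*} [Field K] {a b c : ℕ}
    (α : Fin (b + c) → K) (β : Fin (a + c) → K) (γ : Fin (a + b) → K)
    (hα : Function.Injective α) (hαβ : ∀ i j, α i ≠ β j) (l m : Fin c) :
    (∑ i ∈ univ.filter (fun i : Fin (b + c) => l.1 ≤ i.1 ∧ i.1 ≤ b + m.1),
      (∏ k, (α i - γ k)) /
        ((∏ i' ∈ univ.filter
            (fun i' : Fin (b + c) => (l.1 ≤ i'.1 ∧ i'.1 ≤ b + m.1) ∧ i' ≠ i), (α i - α i')) *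
          ∏ j ∈ univ.filter
            (fun j : Fin (a + c) => c - 1 - l.1 ≤ j.1 ∧ j.1 ≤ a + c - 1 - m.1), (α i - β j))) =
      ∑ i, ((∏ i' ∈ univ.filter (fun i' : Fin (b + c) => i'.1 < l.1), (α i - α i')) *
            ∏ j ∈ univ.filter (fun j : Fin (a + c) => j.1 < c - 1 - l.1), (α i - β j)) *
          ((∏ k, (α i - γ k)) / ((∏ j, (α i - β j)) * ∏ i' ∈ univ.erase i, (α i - α i')) *
            ((∏ i' ∈ univ.filter (fun i' : Fin (b + c) => b + m.1 < i'.1), (α i - α i')) *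
              ∏ j ∈ univ.filter (fun j : Fin (a + c) => a + c - 1 - m.1 < j.1), (α i - β j))) := by
  have hl := l.2
  have hm := m.2
  set S := univ.filter (fun i : Fin (b + c) => l.1 ≤ i.1 ∧ i.1 ≤ b + m.1) with hS
  have hSe : ∀ i, univ.filter (fun i' : Fin (b + c) => (l.1 ≤ i'.1 ∧ i'.1 ≤ b + m.1) ∧ i' ≠ i) =
      S.erase i := fun i => by
    ext; simp [hS, and_comm]
  simp only [hSe]
  have hsub : ∀ i i', i' ≠ i → α i - α i' ≠ 0 := fun i i' h => sub_ne_zero.2 fun e => h (hα e).symm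
  have hsubβ : ∀ i j, α i - β j ≠ 0 := fun i j => sub_ne_zero.2 (hαβ i j)
  have restrict : ∀ g : Fin (b + c) → K, ∑ i ∈ S,
        ((∏ i' ∈ univ.filter (fun i' : Fin (b + c) => i'.1 < l.1), (α i - α i')) *
          g i * (∏ i' ∈ univ.filter (fun i' : Fin (b + c) => b + m.1 < i'.1), (α i - α i'))) =
      ∑ i, ((∏ i' ∈ univ.filter (fun i' : Fin (b + c) => i'.1 < l.1), (α i - α i')) *
          g i * (∏ i' ∈ univ.filter (fun i' : Fin (b + c) => b + m.1 < i'.1), (α i - α i'))) := by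
    intro g
    refine sum_subset (subset_univ _) fun i _ hi => ?_
    have : i.1 < l.1 ∨ b + m.1 < i.1 := by
      simp only [hS, mem_filter, mem_univ, true_and] at hi
      omega
    rcases this with h | h
    · rw [prod_eq_zero (i := i) (by simpa using h) (sub_self _), zero_mul, zero_mul]
    · rw [mul_comm, prod_eq_zero (i := i) (by simpa using h) (sub_self _), zero_mul]
  have hD : ∀ i ∈ S, ∏ i' ∈ univ.erase i, (α i - α i') =
      (∏ i' ∈ univ.filter (fun i' : Fin (b + c) => i'.1 < l.1), (α i - α i')) *
        (∏ i' ∈ S.erase i, (α i - α i')) *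
        (∏ i' ∈ univ.filter (fun i' : Fin (b + c) => b + m.1 < i'.1), (α i - α i')) := by
    intro i hi
    simp only [hS, mem_filter, mem_univ, true_and] at hi
    rw [← prod_union, ← prod_union]
    · refine prod_congr ?_ fun _ _ => rfl
      ext i'
      simp only [hS, mem_union, mem_erase, mem_filter, mem_univ, true_and, and_true, ne_eq,
        Fin.ext_iff]
      omega
    all_goals
      refine disjoint_left.2 fun i' => ?_
      simp only [hS, mem_union, mem_erase, mem_filter, mem_univ, true_and, ne_eq]
      omega
  have hlt : ∀ i ∈ S,
      ∏ i' ∈ univ.filter (fun i' : Fin (b + c) => i'.1 < l.1), (α i - α i') ≠ 0 := by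
    intro i hi
    simp only [hS, mem_filter, mem_univ, true_and] at hi
    refine prod_ne_zero_iff.2 fun i' hi' => hsub _ _ ?_
    simp only [mem_filter, mem_univ, true_and] at hi'
    exact fun h => by subst h; omega
  have hgt : ∀ i ∈ S,
      ∏ i' ∈ univ.filter (fun i' : Fin (b + c) => b + m.1 < i'.1), (α i - α i') ≠ 0 := by
    intro i hi
    simp only [hS, mem_filter, mem_univ, true_and] at hi
    refine prod_ne_zero_iff.2 fun i' hi' => hsub _ _ ?_
    simp only [mem_filter, mem_univ, true_and] at hi'
    exact fun h => by subst h; omega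
  have hSi : ∀ i, ∏ i' ∈ S.erase i, (α i - α i') ≠ 0 := fun i =>
    prod_ne_zero_iff.2 fun i' hi' => hsub _ _ (mem_erase.1 hi').1
  have hβ : ∀ i (T : Finset (Fin (a + c))), ∏ j ∈ T, (α i - β j) ≠ 0 := fun i T =>
    prod_ne_zero_iff.2 fun j _ => hsubβ i j
  have shuffle : ∀ p g x q y : K, p * x * (g * (q * y)) = p * (x * g * y) * q := by
    intros; ring
  simp only [shuffle]
  rw [← restrict]
  by_cases hlm : m.1 ≤ a + l.1 + 1
  · refine sum_congr rfl fun i hi => ?_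
    have hG : ∏ j, (α i - β j) =
        (∏ j ∈ univ.filter (fun j : Fin (a + c) => j.1 < c - 1 - l.1), (α i - β j)) *
        (∏ j ∈ univ.filter
            (fun j : Fin (a + c) => c - 1 - l.1 ≤ j.1 ∧ j.1 ≤ a + c - 1 - m.1), (α i - β j)) *
        ∏ j ∈ univ.filter (fun j : Fin (a + c) => a + c - 1 - m.1 < j.1), (α i - β j) := by
      rw [← prod_union, ← prod_union]
      · refine prod_congr ?_ fun _ _ => rfl
        ext j
        simp only [mem_union, mem_filter, mem_univ, true_and, true_iff]
        omega
      all_goals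
        refine disjoint_left.2 fun j => ?_
        simp only [mem_union, mem_filter, mem_univ, true_and]
        omega
    rw [hD i hi, hG]
    have h1 := hlt i hi
    have h2 := hgt i hi
    have h3 := hSi i
    have h4 := hβ i (univ.filter (fun j : Fin (a + c) => j.1 < c - 1 - l.1))
    have h5 := hβ i (univ.filter
      (fun j : Fin (a + c) => c - 1 - l.1 ≤ j.1 ∧ j.1 ≤ a + c - 1 - m.1))
    have h6 := hβ i (univ.filter (fun j : Fin (a + c) => a + c - 1 - m.1 < j.1))
    field_simp
  · have hcard : #S = b + m.1 - l.1 + 1 := by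
      have : S = Icc (⟨l.1, by omega⟩ : Fin (b + c)) ⟨b + m.1, by omega⟩ := by
        ext i; simp [hS, Fin.le_def]
      rw [this, Fin.card_Icc]
      simp only
      omega
    have hdegγ : (∏ k, (X - C (γ k))).natDegree = a + b := by
      rw [natDegree_prod_of_monic _ _ (fun _ _ => monic_X_sub_C _)]
      simp
    have hJ : univ.filter
        (fun j : Fin (a + c) => c - 1 - l.1 ≤ j.1 ∧ j.1 ≤ a + c - 1 - m.1) = ∅ := by
      ext j
      simp only [mem_filter, mem_univ, true_and, notMem_empty, iff_false]
      omega
    set T := univ.filter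
      (fun j : Fin (a + c) => j.1 < c - 1 - l.1 ∧ a + c - 1 - m.1 < j.1) with hT
    have hTcard : #T ≤ m.1 - a - l.1 - 1 := by
      have : #T ≤ #(Ioo (a + c - 1 - m.1) (c - 1 - l.1)) :=
        card_le_card_of_injOn (fun j => j.1)
          (fun j => by simp [hT, and_comm]) (fun i _ j _ h => Fin.ext h)
      rw [Nat.card_Ioo] at this
      omega
    have hL := Lagrange.sum_eval_div_prod_sub_eq_zero S α hα.injOn (∏ k, (X - C (γ k)))
      (by omega)
    have hR := Lagrange.sum_eval_div_prod_sub_eq_zero S α hα.injOn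
      ((∏ k, (X - C (γ k))) * ∏ j ∈ T, (X - C (β j))) (by
        rw [natDegree_mul (monic_prod_of_monic _ _ fun _ _ => monic_X_sub_C _).ne_zero
          (monic_prod_of_monic _ _ fun _ _ => monic_X_sub_C _).ne_zero, hdegγ,
          natDegree_prod_of_monic _ _ (fun _ _ => monic_X_sub_C _)]
        simp only [natDegree_X_sub_C, sum_const, smul_eq_mul, mul_one]
        omega)
    simp only [eval_mul, eval_prod, eval_sub, eval_X, eval_C] at hL hR
    rw [hJ]
    simp only [prod_empty, mul_one]
    rw [hL, ← hR]
    refine sum_congr rfl fun i hi => ?_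
    have hG : (∏ j ∈ univ.filter (fun j : Fin (a + c) => j.1 < c - 1 - l.1), (α i - β j)) *
        ∏ j ∈ univ.filter (fun j : Fin (a + c) => a + c - 1 - m.1 < j.1), (α i - β j) =
        (∏ j, (α i - β j)) * ∏ j ∈ T, (α i - β j) := by
      rw [← prod_union_inter, ← filter_and]
      congr 1
      refine prod_congr ?_ fun _ _ => rfl
      ext j
      simp only [mem_union, mem_filter, mem_univ, true_and, iff_true]
      omega
    have regroup : ∀ x g y : K, x * g * y = x * y * g := by intros; ring
    rw [hD i hi,
      regroup (∏ j ∈ univ.filter (fun j : Fin (a + c) => j.1 < c - 1 - l.1), (α i - β j)), hG]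
    have h1 := hlt i hi
    have h2 := hgt i hi
    have h3 := hSi i
    have h4 := hβ i univ
    field_simp

/-- The determinant formula (Eq. (3.6) of the paper), obtained from the
Lindström–Gessel–Viennot evaluation of the plane-partition partition function.
All indices here are 0-based; the paper's 1-based index `ℓ` corresponds to `ℓ.1 + 1`, etc. -/
theorem Phi_eq_det (a b c : ℕ)
    (α : Fin (b + c) → ℂ) (β : Fin (a + c) → ℂ) (γ : Fin (a + b) → ℂ)
    (hα : Function.Injective α) (hαβ : ∀ i j, α i ≠ β j) :
    Phi a b c α β γ =
      (∏ p ∈ Finset.univ.filter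
          (fun p : Fin (b + c) × Fin (a + c) =>
            c < p.1.1 + 1 + (p.2.1 + 1) ∧ p.1.1 + 1 + (p.2.1 + 1) ≤ a + b + c + 1),
        (α p.1 - β p.2)) *
      Matrix.det (Matrix.of fun ℓ m : Fin c =>
        ∑ i ∈ Finset.univ.filter
            (fun i : Fin (b + c) => ℓ.1 ≤ i.1 ∧ i.1 ≤ b + m.1),
          (∏ k, (α i - γ k)) /
            ((∏ i' ∈ Finset.univ.filter
                (fun i' : Fin (b + c) => (ℓ.1 ≤ i'.1 ∧ i'.1 ≤ b + m.1) ∧ i' ≠ i),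
              (α i - α i')) *
             ∏ j ∈ Finset.univ.filter
                (fun j : Fin (a + c) => c - 1 - ℓ.1 ≤ j.1 ∧ j.1 ≤ a + c - 1 - m.1),
              (α i - β j))) := by
  open Finset Matrix in
  have hN : c ≤ b + c := Nat.le_add_left c b
  have hM : c ≤ a + c := Nat.le_add_left c a
  have hsub : ∀ i i', i' ≠ i → α i - α i' ≠ 0 := fun i i' h => sub_ne_zero.2 fun e => h (hα e).symm
  set w : Fin (b + c) → ℂ := fun i =>
    (∏ k, (α i - γ k)) / ((∏ j, (α i - β j)) * ∏ i' ∈ univ.erase i, (α i - α i')) with hw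
  set A : Matrix (Fin c) (Fin (b + c)) ℂ := Matrix.of fun l i =>
    (∏ k ∈ Iio l, (α i - α (Fin.castLE hN k))) *
      ∏ k ∈ Iio l.rev, (α i - β (Fin.castLE hM k))
  set B : Matrix (Fin (b + c)) (Fin c) ℂ := Matrix.of fun i m =>
    w i * ((∏ k ∈ Iio m.rev, (α i - α (Fin.castLE hN k).rev)) *
      ∏ k ∈ Iio m, (α i - β (Fin.castLE hM k).rev)) with hB
  have hmat : (Matrix.of fun ℓ m : Fin c =>
        ∑ i ∈ Finset.univ.filter
            (fun i : Fin (b + c) => ℓ.1 ≤ i.1 ∧ i.1 ≤ b + m.1),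
          (∏ k, (α i - γ k)) /
            ((∏ i' ∈ Finset.univ.filter
                (fun i' : Fin (b + c) => (ℓ.1 ≤ i'.1 ∧ i'.1 ≤ b + m.1) ∧ i' ≠ i),
              (α i - α i')) *
             ∏ j ∈ Finset.univ.filter
                (fun j : Fin (a + c) => c - 1 - ℓ.1 ≤ j.1 ∧ j.1 ≤ a + c - 1 - m.1),
              (α i - β j))) = A * B := by
    ext l m
    rw [of_apply, sum_window_eq_sum_univ α β γ hα hαβ, mul_apply]
    refine sum_congr rfl fun i _ => ?_
    have hl := l.2
    have hm := m.2
    have e1 : c - 1 - l.1 = l.rev.1 := by rw [Fin.val_rev]; omega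
    have e2 : b + m.1 = b + c - 1 - m.rev.1 := by rw [Fin.val_rev]; omega
    rw [e1, e2, Fin.prod_filter_val_lt hN, Fin.prod_filter_val_lt hM, Fin.prod_filter_lt_val hN,
      Fin.prod_filter_lt_val hM]
    rfl
  rw [hmat]
  set P := ∏ p ∈ univ.filter (fun p : Fin (b + c) × Fin (a + c) => p.1.1 + p.2.1 + 2 ≤ c),
    (α p.1 - β p.2) with hP
  set Q := ∏ p ∈ univ.filter (fun p : Fin (b + c) × Fin (a + c) =>
    b + c + (a + c) ≤ p.1.1 + p.2.1 + c), (α p.1 - β p.2) with hQ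
  have hdetA : ∀ e : Fin c → Fin (b + c), (A.submatrix id e).det =
      P * (vandermonde (α ∘ e)).det := fun e => by
    rw [hP, ← Fin.prod_Iio_rev_eq_prod_filter hN hM (fun p => α p.1 - β p.2)]
    exact det_prod_sub_mul_prod_sub (fun k => α (Fin.castLE hN k))
      (fun k => β (Fin.castLE hM k)) (α ∘ e) (hα.comp (Fin.castLE_injective hN))
  have hdetB : ∀ e : Fin c → Fin (b + c), (B.submatrix e id).det =
      (∏ k, w (e k)) * (Q * (vandermonde ((α ∘ e) ∘ Fin.rev)).det) := fun e => by
    rw [← Equiv.prod_comp Fin.revPerm (fun k => w (e k)), hQ,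
      ← Fin.prod_Iio_rev_rev_eq_prod_filter hN hM (fun p => α p.1 - β p.2),
      ← det_prod_sub_mul_prod_sub (fun k => α (Fin.castLE hN k).rev)
      (fun k => β (Fin.castLE hM k).rev) ((α ∘ e) ∘ Fin.rev)
      (hα.comp (Fin.rev_injective.comp (Fin.castLE_injective hN))),
      ← det_submatrix_equiv_self Fin.revPerm, ← det_transpose (Matrix.of _), ← det_mul_column]
    congr 1
    ext k m
    simp [hB]
  rw [det_mul_eq_sum_powersetCard A B (fun I =>
    (∏ i ∈ I, w i) * (∏ i ∈ I, ∏ j ∈ I.erase i, (α i - α j)) * (P * Q)), Phi, mul_sum]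
  · refine sum_congr rfl fun I _ => ?_
    have hprod := prod_filter_mul_corner_prods a b c (fun p => α p.1 - β p.2)
    rw [← hP, ← hQ, ← prod_mul_prod_compl I] at hprod
    have regroup : ∀ x W D : ℂ, x * (W * D * (P * Q)) = x * P * Q * (W * D) := by
      intros; ring
    have hw' : ∏ i ∈ I, w i = (∏ i ∈ I, ∏ k, (α i - γ k)) /
        ((∏ i ∈ I, ∏ j, (α i - β j)) * ((∏ i ∈ I, ∏ j ∈ I.erase i, (α i - α j)) *
          ∏ i ∈ I, ∏ j ∈ Iᶜ, (α i - α j))) := by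
      rw [← prod_mul_distrib, ← prod_mul_distrib, ← prod_div_distrib]
      refine prod_congr rfl fun i hi => ?_
      rw [← prod_union]
      · simp only [hw]
        congr 3
        ext j
        by_cases hj : j ∈ I <;> simp [hj]
        exact fun h => hj (h ▸ hi)
      · exact disjoint_left.2 fun j hj => by simpa using mem_of_mem_erase hj
    rw [regroup, hprod, hw']
    have h1 : ∏ i ∈ I, ∏ j, (α i - β j) ≠ 0 :=
      prod_ne_zero_iff.2 fun i _ => prod_ne_zero_iff.2 fun j _ => sub_ne_zero.2 (hαβ i j)
    have h2 : ∏ i ∈ I, ∏ j ∈ I.erase i, (α i - α j) ≠ 0 :=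
      prod_ne_zero_iff.2 fun i _ => prod_ne_zero_iff.2 fun j hj => hsub i j (mem_erase.1 hj).1
    have h3 : ∏ i ∈ I, ∏ j ∈ Iᶜ, (α i - α j) ≠ 0 :=
      prod_ne_zero_iff.2 fun i hi => prod_ne_zero_iff.2 fun j hj =>
        hsub i j fun h => mem_compl.1 hj (h ▸ hi)
    field_simp
  · intro e he
    have herase : ∏ i ∈ univ.image e, ∏ j ∈ (univ.image e).erase i, (α i - α j) =
        ∏ i, ∏ j ∈ univ.erase i, ((α ∘ e) i - (α ∘ e) j) := by
      rw [prod_image he.injOn]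
      refine prod_congr rfl fun i _ => ?_
      rw [← image_erase he, prod_image he.injOn]
      rfl
    rw [hdetA, hdetB, herase, prod_image he.injOn, ← det_vandermonde_mul_det_vandermonde_rev]
    ring
end

section
/- For all nonnegative integers a, b, c there exists a unique polynomial function P : ℂ^{b+c} × ℂ^{a+c} × ℂ^{a+b} → ℂ such that P(α; β; γ) = Φ_{a,b,c}(α; β; γ) for every tuple in which the α_i are pairwise distinct. Moreover P is homogeneous of total degree ab + bc + ca, has degree at most a in each variable α_i, degree at most b in each variable β_j, and degree at most c in each variable γ_k. -/
/-- A function `P : ℂ^{b+c} × ℂ^{a+c} × ℂ^{a+b} → ℂ` is a polynomial function if it is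
given by the evaluation of a multivariate polynomial in all of the variables. -/
def IsPolyFun (a b c : ℕ)
    (P : (Fin (b + c) → ℂ) → (Fin (a + c) → ℂ) → (Fin (a + b) → ℂ) → ℂ) : Prop :=
  ∃ p : MvPolynomial (Fin (b + c) ⊕ Fin (a + c) ⊕ Fin (a + b)) ℂ,
    ∀ α β γ, P α β γ = MvPolynomial.eval (Sum.elim α (Sum.elim β γ)) p

namespace MvPolynomial

section General

variable {R σ ι : Type*} [CommRing R]

theorem X_sub_X_dvd_sub_aeval_update [DecidableEq σ] (i j : σ) (q : MvPolynomial σ R) :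
    (X i - X j : MvPolynomial σ R) ∣ q - aeval (Function.update X i (X j)) q := by
  induction q using MvPolynomial.induction_on with
  | C r => simp
  | add p q hp hq =>
    rw [map_add, add_sub_add_comm]
    exact dvd_add hp hq
  | mul_X p k hp =>
    rw [map_mul, aeval_X]
    have hk : (X i - X j : MvPolynomial σ R) ∣ X k - Function.update X i (X j) k := by
      rcases eq_or_ne k i with rfl | hk
      · simp
      · simp [hk]
    convert dvd_add (hp.mul_right (X k)) (hk.mul_left (aeval (Function.update X i (X j)) p)) using 1
    ring

theorem X_sub_X_dvd_iff [DecidableEq σ] {i j : σ} (hij : i ≠ j) {q : MvPolynomial σ R} :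
    (X i - X j : MvPolynomial σ R) ∣ q ↔
      (aeval (Function.update X i (X j)) q : MvPolynomial σ R) = 0 := by
  constructor
  · rintro ⟨r, rfl⟩
    simp [hij.symm]
  · intro h
    simpa only [h, sub_zero] using X_sub_X_dvd_sub_aeval_update i j q

theorem X_sub_X_ne_zero [Nontrivial R] {i j : σ} (hij : i ≠ j) :
    (X i - X j : MvPolynomial σ R) ≠ 0 :=
  sub_ne_zero.2 fun h => hij (X_injective h)

theorem prime_X_sub_X [IsDomain R] {i j : σ} (hij : i ≠ j) :
    Prime (X i - X j : MvPolynomial σ R) := by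
  classical
  refine ⟨X_sub_X_ne_zero hij, fun h => ?_, fun p q h => ?_⟩
  · simpa using (X_sub_X_dvd_iff hij).1 (isUnit_iff_dvd_one.1 h)
  · simpa only [X_sub_X_dvd_iff hij, map_mul, mul_eq_zero] using h

theorem prod_X_sub_X_dvd [IsDomain R] [UniqueFactorizationMonoid R]
    {e : ι → σ} (he : Function.Injective e) {s : Finset (ι × ι)} (hs : ∀ x ∈ s, x.1 ≠ x.2)
    (hs' : ∀ x ∈ s, x.swap ∉ s)
    {q : MvPolynomial σ R} (h : ∀ x ∈ s, X (e x.1) - X (e x.2) ∣ q) :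
    ∏ x ∈ s, (X (e x.1) - X (e x.2)) ∣ q := by
  classical
  refine Finset.prod_dvd_of_isRelPrime ?_ h
  rintro ⟨i, j⟩ hx ⟨k, l⟩ hy hxy
  have hij := he.ne (hs _ hx)
  have hkl := he.ne (hs _ hy)
  have hsw := hs' _ hx
  refine (prime_X_sub_X hij).irreducible.isRelPrime_iff_not_dvd.2 fun hd => ?_
  rw [X_sub_X_dvd_iff hij, map_sub, aeval_X, aeval_X, sub_eq_zero] at hd
  simp only [Function.update_apply, he.eq_iff] at hd
  have hinj := X_injective (R := R) (σ := σ)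
  have hne : ¬ (k = j ∧ l = i) := by
    rintro ⟨rfl, rfl⟩
    exact hsw hy
  split_ifs at hd with h1 h2 h2
  · exact hkl (by simp [h1, h2])
  · exact hxy (by rw [h1, he (hinj hd)])
  · exact hne ⟨he (hinj hd), h2⟩
  · exact hkl (hinj hd)

theorem IsHomogeneous.of_mul_right [IsDomain R] {q d : MvPolynomial σ R} {n k : ℕ}
    (h : (q * d).IsHomogeneous (n + k)) (hd : d.IsHomogeneous k) (hd0 : d ≠ 0) :
    q.IsHomogeneous n := by
  have key (j : ℕ) : homogeneousComponent j q * d = homogeneousComponent (j + k) (q * d) := by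
    conv_rhs => rw [← sum_homogeneousComponent q, Finset.sum_mul, map_sum]
    have hc (i : ℕ) : homogeneousComponent (j + k) (homogeneousComponent i q * d) =
        if j = i then homogeneousComponent i q * d else 0 := by
      rw [homogeneousComponent_of_mem ((homogeneousComponent_isHomogeneous i q).mul hd)]
      simp
    simp only [hc, Finset.sum_ite_eq]
    split_ifs with hj
    · rfl
    · rw [homogeneousComponent_eq_zero _ _ (by simpa using hj), zero_mul]
  intro m hm
  by_contra hne
  have hz : homogeneousComponent m.degree q * d = 0 := by
    rw [key, homogeneousComponent_of_mem h, if_neg]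
    rw [Finsupp.degree_eq_weight_one]
    exact fun h => hne (Nat.add_right_cancel h)
  have := congrArg (coeff m) ((mul_eq_zero.1 hz).resolve_right hd0)
  rw [coeff_homogeneousComponent] at this
  exact hm (by simpa using this)

theorem le_degreeOf_X_sub_X [Nontrivial R] [DecidableEq σ] {i j : σ} (hij : i ≠ j) (v : σ) :
    ((if v = i then 1 else 0) + if v = j then 1 else 0) ≤
      degreeOf v (X i - X j : MvPolynomial σ R) := by
  have hi : Finsupp.single i 1 ∈ (X i - X j : MvPolynomial σ R).support := by
    simp [coeff_X, Finsupp.single_left_inj, hij.symm]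
  have hj : Finsupp.single j 1 ∈ (X i - X j : MvPolynomial σ R).support := by
    simp [coeff_X, Finsupp.single_left_inj, hij]
  have hi' := monomial_le_degreeOf v hi
  have hj' := monomial_le_degreeOf v hj
  rw [Finsupp.single_apply] at hi' hj'
  grind

theorem degreeOf_X_sub_X_le [Nontrivial R] [DecidableEq σ] (i j : σ) (v : σ) :
    degreeOf v (X i - X j : MvPolynomial σ R) ≤
      (if v = i then 1 else 0) + if v = j then 1 else 0 := by
  grw [degreeOf_sub_le, degreeOf_X, degreeOf_X]
  split_ifs <;> simp

end General
end MvPolynomial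

section Phi

open MvPolynomial Finset

/-- The variables `α_i`, `β_j`, `γ_k`. -/
abbrev PhiVar (a b c : ℕ) := Fin (b + c) ⊕ Fin (a + c) ⊕ Fin (a + b)

variable {a b c : ℕ}

variable (a b c) in
/-- The Vandermonde determinant in the variables `α_i`. -/
noncomputable def phiVandermonde : MvPolynomial (PhiVar a b c) ℂ :=
  (Matrix.vandermonde fun i : Fin (b + c) => (X (Sum.inl i) : MvPolynomial (PhiVar a b c) ℂ)).det

/-- The numerator of the summand of `Phi` indexed by `I`. -/
noncomputable def phiNum (I : Finset (Fin (b + c))) : MvPolynomial (PhiVar a b c) ℂ :=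
  (∏ i ∈ Iᶜ, ∏ j, (X (Sum.inl i) - X (Sum.inr (Sum.inl j)))) *
    ∏ i ∈ I, ∏ k, (X (Sum.inl i) - X (Sum.inr (Sum.inr k)))

/-- The denominator of the summand of `Phi` indexed by `I`. -/
noncomputable def phiDen (I : Finset (Fin (b + c))) : MvPolynomial (PhiVar a b c) ℂ :=
  ∏ i ∈ I, ∏ j ∈ Iᶜ, (X (Sum.inl i) - X (Sum.inl j))

theorem phiVandermonde_eq_prod : phiVandermonde a b c =
    ∏ x : Fin (b + c) × Fin (b + c) with x.2 < x.1, (X (Sum.inl x.1) - X (Sum.inl x.2)) := by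
  rw [phiVandermonde, Matrix.det_vandermonde, prod_sigma']
  refine prod_bij' (fun x _ => (x.2, x.1)) (fun x _ => ⟨x.2, x.1⟩) ?_ ?_ ?_ ?_ ?_ <;> simp

theorem phiVandermonde_isHomogeneous : (phiVandermonde a b c).IsHomogeneous
    #{x : Fin (b + c) × Fin (b + c) | x.2 < x.1} := by
  rw [phiVandermonde_eq_prod, card_eq_sum_ones]
  exact IsHomogeneous.prod _ _ _ fun x _ => (isHomogeneous_X _ _).sub (isHomogeneous_X _ _)

theorem phiVandermonde_ne_zero : phiVandermonde a b c ≠ 0 :=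
  Matrix.det_vandermonde_ne_zero_iff.2 (X_injective.comp Sum.inl_injective)

theorem eval_phiVandermonde (v : PhiVar a b c → ℂ) :
    eval v (phiVandermonde a b c) = (Matrix.vandermonde fun i => v (Sum.inl i)).det := by
  rw [phiVandermonde, RingHom.map_det]
  congr 1
  ext i j
  simp [Matrix.vandermonde_apply]

theorem phiDen_dvd_phiVandermonde (I : Finset (Fin (b + c))) :
    (phiDen I : MvPolynomial (PhiVar a b c) ℂ) ∣ phiVandermonde a b c := by
  rw [phiDen, ← prod_product']
  refine prod_X_sub_X_dvd Sum.inl_injective ?_ ?_ ?_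
  · rintro ⟨i, j⟩ h (rfl : i = j)
    simp at h
  · rintro ⟨i, j⟩ h
    simp only [mem_product, mem_compl, Prod.swap] at h ⊢
    tauto
  · rintro ⟨i, j⟩ h
    have hij : i ≠ j := by
      rintro rfl
      simp at h
    rw [phiVandermonde_eq_prod]
    rcases hij.lt_or_gt with hlt | hlt
    · rw [← neg_dvd, neg_sub]
      exact dvd_prod_of_mem (fun x : Fin (b + c) × Fin (b + c) =>
        (X (Sum.inl x.1) - X (Sum.inl x.2) : MvPolynomial (PhiVar a b c) ℂ))
        (a := (j, i)) (by simpa)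
    · exact dvd_prod_of_mem (fun x : Fin (b + c) × Fin (b + c) =>
        (X (Sum.inl x.1) - X (Sum.inl x.2) : MvPolynomial (PhiVar a b c) ℂ))
        (a := (i, j)) (by simpa)

/-- The cofactor of `phiDen I` in the Vandermonde determinant. -/
noncomputable def phiCofactor (I : Finset (Fin (b + c))) : MvPolynomial (PhiVar a b c) ℂ :=
  (phiDen_dvd_phiVandermonde I).choose

theorem phiDen_mul_phiCofactor (I : Finset (Fin (b + c))) :
    (phiDen I * phiCofactor I : MvPolynomial (PhiVar a b c) ℂ) = phiVandermonde a b c :=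
  (phiDen_dvd_phiVandermonde I).choose_spec.symm

variable (a b c) in
/-- The product of `Phi` with the Vandermonde determinant, as a polynomial. -/
noncomputable def phiNumerator : MvPolynomial (PhiVar a b c) ℂ :=
  ∑ I ∈ powersetCard c (univ : Finset (Fin (b + c))), phiNum I * phiCofactor I

theorem eval_phiNumerator (v : PhiVar a b c → ℂ) (hv : Function.Injective (v ∘ Sum.inl)) :
    eval v (phiNumerator a b c) =
      Phi a b c (v ∘ Sum.inl) (v ∘ Sum.inr ∘ Sum.inl) (v ∘ Sum.inr ∘ Sum.inr) *
        eval v (phiVandermonde a b c) := by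
  rw [phiNumerator, map_sum, Phi, sum_mul]
  refine sum_congr rfl fun I _ => ?_
  have hD : eval v (phiDen I : MvPolynomial (PhiVar a b c) ℂ) ≠ 0 := by
    simp only [phiDen, map_prod, map_sub, eval_X, prod_ne_zero_iff, sub_ne_zero]
    rintro i hi j hj h
    exact mem_compl.1 hj (hv h ▸ hi)
  rw [← phiDen_mul_phiCofactor I, map_mul, map_mul, ← mul_assoc]
  congr 1
  simp only [phiDen, phiNum, map_mul, map_prod, map_sub, eval_X, Function.comp_apply] at hD ⊢
  rw [div_mul_cancel₀ _ hD]

/-- Polynomials agreeing wherever the `α_i` are pairwise distinct are equal. -/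
theorem eq_of_eval_eq_of_injective {p q : MvPolynomial (PhiVar a b c) ℂ}
    (h : ∀ v : PhiVar a b c → ℂ, Function.Injective (v ∘ Sum.inl) → eval v p = eval v q) :
    p = q := by
  refine mul_right_cancel₀ (phiVandermonde_ne_zero (a := a) (b := b) (c := c))
    (MvPolynomial.funext fun v => ?_)
  rw [map_mul, map_mul]
  by_cases hv : Function.Injective (v ∘ Sum.inl)
  · rw [h v hv]
  · have : eval v (phiVandermonde a b c) = 0 := by
      rw [eval_phiVandermonde]
      by_contra h0
      exact hv (Matrix.det_vandermonde_ne_zero_iff.1 h0)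
    rw [this, mul_zero, mul_zero]

theorem Phi_comp_perm (σ : Equiv.Perm (Fin (b + c))) (α : Fin (b + c) → ℂ)
    (β : Fin (a + c) → ℂ) (γ : Fin (a + b) → ℂ) :
    Phi a b c (α ∘ σ) β γ = Phi a b c α β γ := by
  refine sum_equiv σ.finsetCongr (by simp [mem_powersetCard]) fun I _ => ?_
  have hc : (σ.finsetCongr I)ᶜ = Iᶜ.map σ.toEmbedding := by
    ext x
    simp [Equiv.finsetCongr_apply, mem_map_equiv]
  rw [hc]
  simp [Equiv.finsetCongr_apply, prod_map]

theorem rename_swap_phiNumerator {i j : Fin (b + c)} (hij : i ≠ j) :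
    rename (Sum.map (Equiv.swap i j) id) (phiNumerator a b c) = -phiNumerator a b c := by
  refine eq_of_eval_eq_of_injective fun v hv => ?_
  have hv' : Function.Injective ((v ∘ Sum.map (Equiv.swap i j) id) ∘ Sum.inl) :=
    hv.comp (Equiv.swap i j).injective
  have hdet : eval (v ∘ Sum.map (Equiv.swap i j) id) (phiVandermonde a b c) =
      -eval v (phiVandermonde a b c) := by
    rw [eval_phiVandermonde, eval_phiVandermonde]
    have := Matrix.det_permute (Equiv.swap i j) (Matrix.vandermonde fun i => v (Sum.inl i))
    rw [Equiv.Perm.sign_swap hij] at this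
    simpa [Matrix.submatrix, Matrix.vandermonde] using this
  rw [eval_rename, map_neg, eval_phiNumerator _ hv, eval_phiNumerator _ hv', hdet, mul_neg]
  congr 2
  exact Phi_comp_perm (Equiv.swap i j) (v ∘ Sum.inl) _ _

theorem phiVandermonde_dvd_phiNumerator : phiVandermonde a b c ∣ phiNumerator a b c := by
  rw [phiVandermonde_eq_prod]
  refine prod_X_sub_X_dvd Sum.inl_injective ?_ ?_ ?_
  · rintro ⟨i, j⟩ h (rfl : i = j)
    simp at h
  · rintro ⟨i, j⟩ h
    simp only [mem_filter, mem_univ, true_and, Prod.swap, not_lt] at h ⊢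
    exact h.le
  · rintro ⟨i, j⟩ h
    have hij : i ≠ j := by
      rintro rfl
      simp at h
    rw [X_sub_X_dvd_iff (Sum.inl_injective.ne hij)]
    refine MvPolynomial.funext fun v => ?_
    set w : PhiVar a b c → ℂ := Function.update v (Sum.inl i) (v (Sum.inl j)) with hw
    have hvw : eval v (aeval (Function.update X (Sum.inl i) (X (Sum.inl j))) (phiNumerator a b c)) =
        eval w (phiNumerator a b c) := by
      rw [← aeval_eq_eval, ← aeval_eq_eval]
      refine (aeval_bind₁ ..).trans ?_
      congr 2
      funext k
      rcases eq_or_ne k (Sum.inl i) with rfl | hk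
      · simp [w]
      · simp [w, hk]
    have hsw : w ∘ Sum.map (Equiv.swap i j) id = w := by
      ext (k | k)
      · simp only [hw, Function.comp_apply, Sum.map_inl, Function.update_apply, Equiv.swap_apply_def]
        grind
      · rfl
    have := congrArg (eval w) (rename_swap_phiNumerator (a := a) hij)
    rw [eval_rename, hsw, map_neg] at this
    rw [hvw, map_zero]
    exact self_eq_neg.1 this

theorem mul_phiVandermonde_eq_phiNumerator_iff {p : MvPolynomial (PhiVar a b c) ℂ} :
    p * phiVandermonde a b c = phiNumerator a b c ↔
      ∀ α β γ, Function.Injective α →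
        eval (Sum.elim α (Sum.elim β γ)) p = Phi a b c α β γ := by
  constructor
  · intro h α β γ hα
    have h' := congrArg (eval (Sum.elim α (Sum.elim β γ))) h
    rw [map_mul, eval_phiNumerator (Sum.elim α (Sum.elim β γ)) hα] at h'
    refine mul_right_cancel₀ ?_ h'
    rw [eval_phiVandermonde]
    exact Matrix.det_vandermonde_ne_zero_iff.2 hα
  · intro h
    refine eq_of_eval_eq_of_injective fun v hv => ?_
    rw [map_mul, eval_phiNumerator v hv, ← h _ _ _ hv]
    congr 3
    funext k
    rcases k with k | k | k <;> rfl

theorem phiNum_isHomogeneous {I : Finset (Fin (b + c))} (hI : #I = c) :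
    (phiNum I : MvPolynomial (PhiVar a b c) ℂ).IsHomogeneous
      (a * b + b * c + c * a + c * b) := by
  have hI' : #Iᶜ = b := by simp [card_compl, hI]
  have hdeg : a * b + b * c + c * a + c * b =
      ∑ i ∈ Iᶜ, ∑ j : Fin (a + c), 1 + ∑ i ∈ I, ∑ k : Fin (a + b), 1 := by
    simp only [sum_const, card_univ, Fintype.card_fin, smul_eq_mul, hI, hI']
    ring
  rw [hdeg]
  exact (IsHomogeneous.prod Iᶜ _ _ fun i _ => IsHomogeneous.prod univ _ _ fun j _ =>
    (isHomogeneous_X ℂ (Sum.inl i : PhiVar a b c)).sub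
      (isHomogeneous_X ℂ (Sum.inr (Sum.inl j)))).mul
    (IsHomogeneous.prod I _ _ fun i _ => IsHomogeneous.prod univ _ _ fun k _ =>
    (isHomogeneous_X ℂ (Sum.inl i : PhiVar a b c)).sub
      (isHomogeneous_X ℂ (Sum.inr (Sum.inr k))))

theorem phiDen_isHomogeneous {I : Finset (Fin (b + c))} (hI : #I = c) :
    (phiDen I : MvPolynomial (PhiVar a b c) ℂ).IsHomogeneous (c * b) := by
  have hI' : #Iᶜ = b := by simp [card_compl, hI]
  have hdeg : c * b = ∑ i ∈ I, ∑ j ∈ Iᶜ, 1 := by simp [hI, hI']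
  rw [hdeg]
  exact IsHomogeneous.prod I _ _ fun i _ => IsHomogeneous.prod Iᶜ _ _ fun j _ =>
    (isHomogeneous_X ℂ (Sum.inl i : PhiVar a b c)).sub (isHomogeneous_X ℂ (Sum.inl j))

theorem phiDen_ne_zero (I : Finset (Fin (b + c))) :
    (phiDen I : MvPolynomial (PhiVar a b c) ℂ) ≠ 0 :=
  left_ne_zero_of_mul ((phiDen_mul_phiCofactor I).trans_ne phiVandermonde_ne_zero)

theorem phiCofactor_ne_zero (I : Finset (Fin (b + c))) :
    (phiCofactor I : MvPolynomial (PhiVar a b c) ℂ) ≠ 0 :=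
  right_ne_zero_of_mul ((phiDen_mul_phiCofactor I).trans_ne phiVandermonde_ne_zero)

theorem isHomogeneous_of_mul_phiVandermonde_eq {p : MvPolynomial (PhiVar a b c) ℂ}
    (hp : p * phiVandermonde a b c = phiNumerator a b c) :
    p.IsHomogeneous (a * b + b * c + c * a) := by
  refine IsHomogeneous.of_mul_right ?_ phiVandermonde_isHomogeneous phiVandermonde_ne_zero
  rw [hp]
  refine IsHomogeneous.sum _ _ _ fun I hI => ?_
  replace hI := (mem_powersetCard.1 hI).2
  have hV : (phiDen I * phiCofactor I : MvPolynomial (PhiVar a b c) ℂ).IsHomogeneous _ :=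
    (phiDen_mul_phiCofactor I).symm ▸ phiVandermonde_isHomogeneous
  have hle : c * b ≤ #{x : Fin (b + c) × Fin (b + c) | x.2 < x.1} := by
    rw [← hV.totalDegree (mul_ne_zero (phiDen_ne_zero I) (phiCofactor_ne_zero I)),
      totalDegree_mul_of_isDomain (phiDen_ne_zero I) (phiCofactor_ne_zero I),
      (phiDen_isHomogeneous hI).totalDegree (phiDen_ne_zero I)]
    exact Nat.le_add_right _ _
  obtain ⟨e, he⟩ := Nat.exists_eq_add_of_le' hle
  rw [he] at hV ⊢
  rw [mul_comm] at hV
  rw [add_comm e, ← add_assoc]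
  exact (phiNum_isHomogeneous hI).mul (hV.of_mul_right (phiDen_isHomogeneous hI) (phiDen_ne_zero I))

theorem degreeOf_le_of_mul_phiVandermonde_eq {p : MvPolynomial (PhiVar a b c) ℂ}
    (hp : p * phiVandermonde a b c = phiNumerator a b c) (v : PhiVar a b c) (d : ℕ)
    (h : ∀ I : Finset (Fin (b + c)), #I = c →
      degreeOf v (phiNum I : MvPolynomial (PhiVar a b c) ℂ) ≤
        d + degreeOf v (phiDen I : MvPolynomial (PhiVar a b c) ℂ)) :
    degreeOf v p ≤ d := by
  rcases eq_or_ne p 0 with rfl | hp0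
  · simp
  rw [← Nat.add_le_add_iff_right, ← degreeOf_mul_eq hp0 phiVandermonde_ne_zero, hp]
  refine (degreeOf_sum_le _ _ _).trans (Finset.sup_le fun I hI => ?_)
  replace hI := h I (mem_powersetCard.1 hI).2
  grw [degreeOf_mul_le, hI]
  rw [← phiDen_mul_phiCofactor I, degreeOf_mul_eq (phiDen_ne_zero I) (phiCofactor_ne_zero I),
    add_assoc]

theorem degreeOf_phiNum_le (I : Finset (Fin (b + c))) (v : PhiVar a b c) :
    degreeOf v (phiNum I : MvPolynomial (PhiVar a b c) ℂ) ≤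
      (∑ i ∈ Iᶜ, ∑ j : Fin (a + c), ((if v = Sum.inl i then 1 else 0) +
        if v = Sum.inr (Sum.inl j) then 1 else 0)) +
      ∑ i ∈ I, ∑ k : Fin (a + b), ((if v = Sum.inl i then 1 else 0) +
        if v = Sum.inr (Sum.inr k) then 1 else 0) := by
  refine (degreeOf_mul_le _ _ _).trans (add_le_add ?_ ?_) <;>
  exact (degreeOf_prod_le _ _ _).trans <| sum_le_sum fun i _ =>
    (degreeOf_prod_le _ _ _).trans <| sum_le_sum fun j _ => degreeOf_X_sub_X_le _ _ _

theorem le_degreeOf_phiDen (I : Finset (Fin (b + c))) (v : PhiVar a b c) :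
    ∑ i ∈ I, ∑ j ∈ Iᶜ, ((if v = Sum.inl i then 1 else 0) + if v = Sum.inl j then 1 else 0) ≤
      degreeOf v (phiDen I : MvPolynomial (PhiVar a b c) ℂ) := by
  have hne {i j : Fin (b + c)} (hi : i ∈ I) (hj : j ∈ Iᶜ) :
      (Sum.inl i : PhiVar a b c) ≠ Sum.inl j :=
    Sum.inl_injective.ne (by rintro rfl; exact mem_compl.1 hj hi)
  rw [phiDen, degreeOf_prod_eq _ _ fun i hi => prod_ne_zero_iff.2 fun j hj =>
    X_sub_X_ne_zero (hne hi hj)]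
  refine sum_le_sum fun i hi => ?_
  rw [degreeOf_prod_eq _ _ fun j hj => X_sub_X_ne_zero (hne hi hj)]
  exact sum_le_sum fun j hj => le_degreeOf_X_sub_X (hne hi hj) v

end Phi

/-- There is a unique polynomial function extending `Φ_{a,b,c}` from the locus where the
`α_i` are pairwise distinct; moreover (any polynomial representing) this extension is
homogeneous of total degree `ab + bc + ca`, of degree at most `a` in each `α_i`,
at most `b` in each `β_j`, and at most `c` in each `γ_k`. -/
theorem Phi_polynomial_extension (a b c : ℕ) :
    (∃! P : (Fin (b + c) → ℂ) → (Fin (a + c) → ℂ) → (Fin (a + b) → ℂ) → ℂ,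
      IsPolyFun a b c P ∧
        ∀ α β γ, Function.Injective α → P α β γ = Phi a b c α β γ) ∧
    ∀ (P : (Fin (b + c) → ℂ) → (Fin (a + c) → ℂ) → (Fin (a + b) → ℂ) → ℂ)
      (p : MvPolynomial (Fin (b + c) ⊕ Fin (a + c) ⊕ Fin (a + b)) ℂ),
      (∀ α β γ, P α β γ = MvPolynomial.eval (Sum.elim α (Sum.elim β γ)) p) →
      (∀ α β γ, Function.Injective α → P α β γ = Phi a b c α β γ) →
      p.IsHomogeneous (a * b + b * c + c * a) ∧
      (∀ i, p.degreeOf (Sum.inl i) ≤ a) ∧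
      (∀ j, p.degreeOf (Sum.inr (Sum.inl j)) ≤ b) ∧
      (∀ k, p.degreeOf (Sum.inr (Sum.inr k)) ≤ c) := by
  refine ⟨?_, fun P p hP hPhi => ?_⟩
  · obtain ⟨p, hp⟩ := phiVandermonde_dvd_phiNumerator (a := a) (b := b) (c := c)
    rw [mul_comm] at hp
    refine ⟨fun α β γ => MvPolynomial.eval (Sum.elim α (Sum.elim β γ)) p,
      ⟨⟨p, fun _ _ _ => rfl⟩, mul_phiVandermonde_eq_phiNumerator_iff.1 hp.symm⟩, ?_⟩
    rintro Q ⟨⟨q, hq⟩, hQ⟩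
    have hq' : q * phiVandermonde a b c = phiNumerator a b c :=
      mul_phiVandermonde_eq_phiNumerator_iff.2 fun α β γ hα => by rw [← hq, hQ α β γ hα]
    obtain rfl := mul_right_cancel₀ phiVandermonde_ne_zero (hq'.trans hp)
    funext α β γ
    exact hq α β γ
  · have hp : p * phiVandermonde a b c = phiNumerator a b c :=
      mul_phiVandermonde_eq_phiNumerator_iff.2 fun α β γ hα => by rw [← hP, hPhi α β γ hα]
    refine ⟨isHomogeneous_of_mul_phiVandermonde_eq hp, fun i => ?_, fun j => ?_, fun k => ?_⟩ <;>
    refine degreeOf_le_of_mul_phiVandermonde_eq hp _ _ fun I hI => ?_ <;>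
    have hI' : (Iᶜ).card = b := by simp [Finset.card_compl, hI]
    · grw [degreeOf_phiNum_le, ← le_degreeOf_phiDen]
      by_cases hi : i ∈ I
      · simp [Finset.sum_add_distrib, hi, hI']
      · simp [Finset.sum_add_distrib, hi, hI]
    · grw [degreeOf_phiNum_le]
      simp [hI']
    · grw [degreeOf_phiNum_le]
      simp [hI]
end

section
/- Let a, b, c ≥ 0 and let P be a polynomial extension of Φ_{a,b,c}. Then for all complex numbers α, β and γ_1, …, γ_{a+b} with α ≠ γ_k for every k, P(α,…,α; β,…,β; γ_1,…,γ_{a+b}) = (α − β)^{ab} · ∏_{k=1}^{a+b} (α − γ_k)^{c} · Σ_T ∏_{u ∈ cells(T)} (γ_{T(u)} − β)/(α − γ_{T(u)}), where the sum runs over all semistandard Young tableaux T of rectangular shape b × c with entries in {1,…,a+b}; i.e. the right-hand Schur-function factor is the Schur polynomial of the rectangular partition (c^b) evaluated at the numbers (γ_k − β)/(α − γ_k), k = 1,…,a+b. (This is the Schur-function formula, Eq. (4.3) of the paper, with signs fixed by the explicit definition of Φ.) -/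
/-- Semistandard Young tableaux of rectangular shape `b × c` (rows indexed by `Fin b`,
columns by `Fin c`) with entries in `{1, …, a+b}` (modelled as `Fin (a + b)`): rows are
weakly increasing left to right and columns strictly increasing top to bottom. -/
def IsRectSSYT (a b c : ℕ) (T : Fin b → Fin c → Fin (a + b)) : Prop :=
  (∀ (i : Fin b) (j j' : Fin c), j ≤ j' → T i j ≤ T i j') ∧
    (∀ (i i' : Fin b) (j : Fin c), i < i' → T i j < T i' j)

instance (a b c : ℕ) : DecidablePred (IsRectSSYT a b c) := fun _ => by
  unfold IsRectSSYT; infer_instance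

/-- **Cauchy–Binet formula**, where the products of complementary minors are given as a function
of the set of selected rows. -/
theorem det_sum_mul_eq_sum_powersetCard {R : Type*} [CommRing R] {c N : ℕ}
    (A B : Fin N → Fin c → R) (F : Finset (Fin N) → R)
    (hF : ∀ φ : Fin c → Fin N, Function.Injective φ →
      (Matrix.of fun p q => A (φ p) q).det * (Matrix.of fun p q => B (φ p) q).det =
        F (Finset.univ.image φ)) :
    (Matrix.of fun p q => ∑ i, A i p * B i q).det =
      ∑ I ∈ Finset.powersetCard c (Finset.univ : Finset (Fin N)), F I := by
  classical
  have hexp : (Matrix.of fun p q => ∑ i, A i p * B i q).det =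
      ∑ φ : Fin c → Fin N, (∏ p, A (φ p) p) * (Matrix.of fun p q => B (φ p) q).det := by
    have h1 : (Matrix.of fun p q => ∑ i, A i p * B i q).det =
        (Matrix.detRowAlternating (n := Fin c) (R := R)).toMultilinearMap
          (fun p => ∑ i, A i p • B i) := by
      change _ = Matrix.det _
      congr 1
      ext p q
      simp [Finset.sum_apply]
    rw [h1, MultilinearMap.map_sum]
    refine Finset.sum_congr rfl fun φ _ => ?_
    rw [MultilinearMap.map_smul_univ]
    rfl
  rw [hexp, ← Finset.sum_filter_of_ne (p := Function.Injective)]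
  swap
  · intro φ _ hne
    by_contra hinj
    simp only [Function.Injective, not_forall] at hinj
    obtain ⟨p, q, hpq, hne'⟩ := hinj
    apply hne
    rw [Matrix.det_zero_of_row_eq hne', mul_zero]
    ext; simp [hpq]
  rw [← Finset.sum_fiberwise_of_maps_to (s := Finset.univ.filter (Function.Injective))
    (t := Finset.powersetCard c (Finset.univ : Finset (Fin N)))
    (g := fun φ : Fin c → Fin N => Finset.univ.image φ)]
  swap
  · intro φ hφ
    simp only [Finset.mem_filter, Finset.mem_univ, true_and] at hφ
    simp [Finset.mem_powersetCard, Finset.card_image_of_injective _ hφ]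
  refine Finset.sum_congr rfl fun I hI => ?_
  have hc : I.card = c := (Finset.mem_powersetCard.mp hI).2
  set e := I.orderEmbOfFin hc with he
  have hrange : Finset.univ.image e = I := by
    ext x
    rw [← Finset.mem_coe, Finset.coe_image, Finset.coe_univ, Set.image_univ, he,
      Finset.range_orderEmbOfFin, Finset.mem_coe]
  have hFI := hF e e.injective
  rw [hrange] at hFI
  rw [← hFI, Matrix.det_apply', Finset.sum_mul]
  symm
  refine Finset.sum_bij (fun σ _ => fun p => e (σ p)) ?_ ?_ ?_ ?_
  · intro σ _
    simp only [Finset.mem_filter, Finset.mem_univ, true_and]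
    refine ⟨e.injective.comp σ.injective, ?_⟩
    have : (fun p => e (σ p)) = e ∘ σ := rfl
    rw [this, ← Finset.image_image, Finset.image_univ_of_surjective σ.surjective, hrange]
  · intro σ _ τ _ h
    ext p
    exact congrArg Fin.val (e.injective (congrFun h p))
  · intro φ hφ
    simp only [Finset.mem_filter, Finset.mem_univ, true_and] at hφ
    have hmem : ∀ p, ∃ q, e q = φ p := fun p => by
      have : φ p ∈ Finset.univ.image e := by
        rw [hrange, ← hφ.2]; exact Finset.mem_image_of_mem _ (Finset.mem_univ p)
      simpa using this
    choose s hs using hmem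
    have hsinj : Function.Injective s := fun p q h => hφ.1 (by rw [← hs, ← hs, h])
    exact ⟨Equiv.ofBijective s (Finite.injective_iff_bijective.mp hsinj), Finset.mem_univ _,
      funext hs⟩
  · intro σ _
    have := Matrix.det_permute σ (Matrix.of fun p q => B (e p) q)
    have h2 : (Matrix.of fun p q => B (e (σ p)) q) =
      (Matrix.of fun p q => B (e p) q).submatrix σ id := rfl
    rw [h2, this]
    simp only [Matrix.of_apply]
    ring

open Filter Topology Polynomial

/-- The divided difference of a polynomial at nodes shrinking to `0`. -/
theorem tendsto_sum_eval_div_prod (N : ℕ) (hN : 0 < N) (τ : Fin N → ℂ) (hτ : Function.Injective τ)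
    (H : ℂ[X]) :
    Tendsto (fun s : ℂ => ∑ i, H.eval (s * τ i) / ∏ j ∈ Finset.univ.erase i, (s * τ i - s * τ j))
      (𝓝[≠] 0) (𝓝 (H.coeff (N - 1))) := by
  induction H using Polynomial.induction_on' with
  | add p q hp hq =>
    simpa only [eval_add, add_div, Finset.sum_add_distrib, coeff_add] using hp.add hq
  | monomial m z =>
    have hw : ∀ s : ℂ, ∀ i, ∏ j ∈ Finset.univ.erase i, (s * τ i - s * τ j) =
        s ^ (N - 1) * ∏ j ∈ Finset.univ.erase i, (τ i - τ j) := fun s i => by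
      simp_rw [← mul_sub]
      rw [Finset.prod_mul_distrib, Finset.prod_const, Finset.card_erase_of_mem (Finset.mem_univ i)]
      simp
    rcases le_or_gt m (N - 1) with hm | hm
    · refine Tendsto.congr' (f₁ := fun _ => (monomial m z).coeff (N - 1)) ?_ tendsto_const_nhds
      filter_upwards [self_mem_nhdsWithin] with s hs
      have hinj : Function.Injective fun i => s * τ i := fun i j h =>
        hτ (mul_left_cancel₀ hs h)
      have := Lagrange.coeff_eq_sum (s := Finset.univ) (v := fun i => s * τ i)
        (hinj.injOn) (P := monomial m z)
        (lt_of_le_of_lt (degree_monomial_le m z) (by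
          simp only [Finset.card_univ, Fintype.card_fin]
          exact_mod_cast (by omega : m < N)))
      simpa using this
    · have h0 : (monomial m z).coeff (N - 1) = 0 := by simp [coeff_monomial, hm.ne']
      rw [h0]
      refine Tendsto.congr' (f₁ := fun s : ℂ => s ^ (m - (N - 1)) *
        ∑ i, z * τ i ^ m / ∏ j ∈ Finset.univ.erase i, (τ i - τ j)) ?_ ?_
      · filter_upwards [self_mem_nhdsWithin] with s hs
        have hs' : s ≠ 0 := hs
        rw [Finset.mul_sum]
        refine Finset.sum_congr rfl fun i _ => ?_
        rw [hw, eval_monomial, mul_pow, ← Nat.sub_add_cancel hm.le, pow_add s, Nat.add_sub_cancel]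
        field_simp
      · refine Tendsto.mono_left ?_ nhdsWithin_le_nhds
        have : Continuous fun s : ℂ => s ^ (m - (N - 1)) *
          ∑ i, z * τ i ^ m / ∏ j ∈ Finset.univ.erase i, (τ i - τ j) := by fun_prop
        convert this.tendsto 0 using 2
        rw [zero_pow (by omega), zero_mul]

/-- The coefficients of a polynomial, extended by zero to negative indices. -/
noncomputable def intCoeff (H : ℂ[X]) (k : ℤ) : ℂ := if k < 0 then 0 else H.coeff k.toNat

theorem coeff_X_pow_mul_eq_intCoeff (H : ℂ[X]) (m n : ℕ) :
    (X ^ m * H).coeff n = intCoeff H (n - m) := by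
  rw [coeff_X_pow_mul', intCoeff]
  by_cases h : m ≤ n
  · rw [if_pos h, if_neg (by omega)]
    congr 1
    omega
  · rw [if_neg h, if_pos (by omega)]

theorem intCoeff_mul_one_add (H : ℂ[X]) (y : ℂ) (k : ℤ) :
    intCoeff (H * (1 + C y * X)) k = intCoeff H k + y * intCoeff H (k - 1) := by
  have h : H * (1 + C y * X) = H + C y * (H * X) := by ring
  rw [h]
  unfold intCoeff
  rcases lt_trichotomy k 0 with hk | rfl | hk
  · rw [if_pos hk, if_pos hk, if_pos (by omega)]; simp
  · simp
  · obtain ⟨m, rfl⟩ : ∃ m : ℕ, k = m + 1 := ⟨(k - 1).toNat, by omega⟩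
    rw [if_neg (by omega), if_neg (by omega), if_neg (by omega)]
    have h1 : ((m : ℤ) + 1).toNat = m + 1 := by omega
    have h2 : ((m : ℤ) + 1 - 1).toNat = m := by omega
    rw [h1, h2, coeff_add, coeff_C_mul, coeff_mul_X]

/-- The generating polynomial of the elementary symmetric polynomials. -/
noncomputable def elemGen {n : ℕ} (y : Fin n → ℂ) : ℂ[X] := ∏ k, (1 + C (y k) * X)

/-- The dual Jacobi–Trudi determinant for column lengths `l`. -/
noncomputable def dualJacobiTrudi {n c : ℕ} (y : Fin n → ℂ) (l : Fin c → ℤ) : ℂ :=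
  (Matrix.of fun p q : Fin c => intCoeff (elemGen y) (l p - p + q)).det

/-- Column indicators of a semistandard tableau with column lengths `l`: `w k` is the set of
columns which contain the entry `k`. -/
def IsColumnPattern {n c : ℕ} (l : Fin c → ℤ) (w : Fin n → Finset (Fin c)) : Prop :=
  (∀ j, ((Finset.univ.filter fun k => j ∈ w k).card : ℤ) = l j) ∧
    ∀ m : ℕ, Antitone fun j => (Finset.univ.filter fun k : Fin n => (k : ℕ) < m ∧ j ∈ w k).card

theorem IsColumnPattern.antitone {n c : ℕ} {l : Fin c → ℤ} {w : Fin n → Finset (Fin c)}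
    (h : IsColumnPattern l w) : Antitone l := by
  intro i j hij
  have := h.2 n hij
  simp only [Fin.is_lt, true_and] at this
  rw [← h.1, ← h.1]
  exact_mod_cast this

theorem card_filter_snoc {n c : ℕ} (w : Fin n → Finset (Fin c)) (s : Finset (Fin c)) (j : Fin c)
    (Q : ℕ → Prop) [DecidablePred Q] :
    (Finset.univ.filter fun k : Fin (n + 1) =>
      Q k ∧ j ∈ (Fin.snoc w s : Fin (n + 1) → Finset (Fin c)) k).card =
    (Finset.univ.filter fun k : Fin n => Q k ∧ j ∈ w k).card + if Q n ∧ j ∈ s then 1 else 0 := by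
  simp only [Finset.card_filter, Fin.sum_univ_castSucc, Fin.snoc_castSucc, Fin.snoc_last,
    Fin.val_castSucc, Fin.val_last]

theorem isColumnPattern_snoc {n c : ℕ} {l : Fin c → ℤ} (hl : Antitone l)
    (w : Fin n → Finset (Fin c)) (s : Finset (Fin c)) :
    IsColumnPattern l (Fin.snoc w s : Fin (n + 1) → Finset (Fin c)) ↔
      IsColumnPattern (fun j => l j - if j ∈ s then 1 else 0) w := by
  have hcard (j : Fin c) := card_filter_snoc w s j (fun _ => True)
  simp only [true_and] at hcard
  have hcardm (m : ℕ) (j : Fin c) := card_filter_snoc w s j (fun k => k < m)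
  have hbig {n : ℕ} (v : Fin n → Finset (Fin c)) (m : ℕ) (hm : n ≤ m) (j : Fin c) :
      (Finset.univ.filter fun k : Fin n => (k : ℕ) < m ∧ j ∈ v k) =
      (Finset.univ.filter fun k : Fin n => j ∈ v k) := by
    ext k
    have : (k : ℕ) < m := by omega
    simp [this]
  have hfirst : (∀ j, ((Finset.univ.filter fun k =>
      j ∈ (Fin.snoc w s : Fin (n + 1) → Finset (Fin c)) k).card : ℤ) = l j) ↔
      ∀ j, ((Finset.univ.filter fun k => j ∈ w k).card : ℤ) = l j - if j ∈ s then 1 else 0 := by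
    refine forall_congr' fun j => ?_
    rw [hcard]
    push_cast
    exact eq_sub_iff_add_eq.symm
  unfold IsColumnPattern
  rw [hfirst]
  refine and_congr_right fun hcount => ⟨fun h m => ?_, fun h m => ?_⟩
  · rcases le_or_gt m n with hm | hm
    · convert h m using 2 with j
      rw [hcardm, if_neg (by omega), add_zero]
    · convert h n using 2 with j
      rw [hcardm, if_neg (by omega), add_zero, hbig w m hm.le, hbig w n le_rfl]
  · rcases le_or_gt m n with hm | hm
    · convert h m using 2 with j
      rw [hcardm, if_neg (by omega), add_zero]
    · intro i j hij
      have hl' := hl hij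
      rw [← hfirst] at hcount
      dsimp only
      rw [hbig _ m hm, hbig _ m hm]
      rw [← hcount, ← hcount] at hl'
      exact_mod_cast hl'

theorem dualJacobiTrudi_snoc {n c : ℕ} (y : Fin (n + 1) → ℂ) (l : Fin c → ℤ) :
    dualJacobiTrudi y l = ∑ s : Finset (Fin c), y (Fin.last n) ^ s.card *
      dualJacobiTrudi (fun k : Fin n => y k.castSucc) (fun j => l j - if j ∈ s then 1 else 0) := by
  classical
  set H := elemGen (fun k : Fin n => y k.castSucc) with hH
  have hgen : elemGen y = H * (1 + C (y (Fin.last n)) * X) := by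
    rw [hH, elemGen, elemGen, Fin.prod_univ_castSucc]
  set u : Fin c → Fin c → ℂ := fun p q => intCoeff H (l p - p + q)
  set v : Fin c → Fin c → ℂ := fun p q => intCoeff H (l p - p + q - 1)
  let D := (Matrix.detRowAlternating (n := Fin c) (R := ℂ)).toMultilinearMap
  have h1 : dualJacobiTrudi y l = D ((fun p => y (Fin.last n) • v p) + u) := by
    rw [dualJacobiTrudi]
    change _ = Matrix.det _
    congr 1
    ext p q
    simp only [Matrix.of_apply, hgen, intCoeff_mul_one_add, Pi.add_apply, Pi.smul_apply,
      smul_eq_mul, u, v]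
    ring
  rw [h1, MultilinearMap.map_add_univ]
  refine Finset.sum_congr rfl fun s _ => ?_
  have h2 : s.piecewise (fun p => y (Fin.last n) • v p) u =
      s.piecewise (fun p => y (Fin.last n) • (s.piecewise v u) p) (s.piecewise v u) := by
    ext p q
    by_cases hp : p ∈ s <;> simp [hp]
  rw [h2, MultilinearMap.map_piecewise_smul D (fun _ => y (Fin.last n)), Finset.prod_const,
    smul_eq_mul]
  congr 1
  rw [dualJacobiTrudi]
  change Matrix.det _ = _
  congr 1
  ext p q
  by_cases hp : p ∈ s
  · simp only [hp, Finset.piecewise_eq_of_mem, Matrix.of_apply, if_true, v]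
    congr 1; ring
  · simp [hp, u, H]

theorem antitone_of_adjacent {c : ℕ} {l : Fin c → ℤ}
    (h : ∀ i j : Fin c, (j : ℕ) = i + 1 → l j ≤ l i) : Antitone l := by
  have key : ∀ d : ℕ, ∀ i j : Fin c, (j : ℕ) = i + d → l j ≤ l i := by
    intro d
    induction d with
    | zero => intro i j hij; rw [Fin.ext (by omega : (j : ℕ) = i)]
    | succ d ih =>
      intro i j hij
      have hk : (i : ℕ) + d < c := by omega
      exact (h ⟨i + d, hk⟩ j (by simp only; omega)).trans (ih i ⟨i + d, hk⟩ rfl)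
  intro i j hij
  exact key (j - i) i j (by have : (i : ℕ) ≤ j := hij; omega)

theorem dualJacobiTrudi_eq_zero {n c : ℕ} (y : Fin n → ℂ) {l : Fin c → ℤ} (hl : Antitone l)
    (s : Finset (Fin c)) (hs : ¬ Antitone fun j => l j - if j ∈ s then 1 else 0) :
    dualJacobiTrudi y (fun j => l j - if j ∈ s then 1 else 0) = 0 := by
  obtain ⟨i, j, hij, hlt⟩ : ∃ i j : Fin c, (j : ℕ) = i + 1 ∧
      l i - (if i ∈ s then 1 else 0) < l j - if j ∈ s then 1 else 0 := by
    by_contra! hcon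
    exact hs (antitone_of_adjacent hcon)
  have hle : l j ≤ l i := hl (by rw [Fin.le_def]; omega)
  refine Matrix.det_zero_of_row_eq (i := i) (j := j) (by rintro rfl; omega) ?_
  ext q
  simp only [Matrix.of_apply]
  congr 1
  split_ifs at hlt ⊢ <;> omega

theorem dualJacobiTrudi_zero {c : ℕ} (y : Fin 0 → ℂ) {l : Fin c → ℤ} (hl : Antitone l) :
    dualJacobiTrudi y l = if l = 0 then 1 else 0 := by
  have hentry : ∀ k : ℤ, intCoeff (elemGen y) k = if k = 0 then 1 else 0 := by
    intro k
    simp only [elemGen, Finset.univ_eq_empty, Finset.prod_empty, intCoeff, coeff_one]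
    split_ifs <;> first | rfl | omega
  simp only [dualJacobiTrudi, hentry]
  split_ifs with h
  · subst h
    convert Matrix.det_one (n := Fin c) (R := ℂ) using 2
    ext p q
    simp only [Matrix.of_apply, Matrix.one_apply, Pi.zero_apply]
    refine if_congr ?_ rfl rfl
    rw [Fin.ext_iff]; omega
  · by_contra hne
    apply h
    have hrow : ∀ p : Fin c, ∃ q : Fin c, l p - p + q = 0 := by
      intro p
      by_contra! hp
      exact hne (Matrix.det_eq_zero_of_row_eq_zero p fun q => by simp [hp q])
    choose f hf using hrow
    have hmono : StrictMono f := by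
      intro i j hij
      have h1 := hl hij.le
      have h2 := hf i
      have h3 := hf j
      rw [Fin.lt_def] at hij ⊢
      omega
    have hid : f = id := by
      have hb := Finite.injective_iff_bijective.mp hmono.injective
      exact congrArg DFunLike.coe (Subsingleton.elim
        (hmono.orderIsoOfSurjective f hb.surjective) (OrderIso.refl _))
    funext p
    have := hf p
    rw [hid] at this
    simp at this
    simpa using this

open Classical in
/-- The dual Jacobi–Trudi identity. -/
theorem dualJacobiTrudi_eq_sum {n c : ℕ} (y : Fin n → ℂ) {l : Fin c → ℤ} (hl : Antitone l) :
    dualJacobiTrudi y l =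
      ∑ w : Fin n → Finset (Fin c), if IsColumnPattern l w then ∏ k, y k ^ (w k).card else 0 := by
  induction n generalizing l with
  | zero =>
    rw [dualJacobiTrudi_zero y hl, Fintype.sum_unique]
    have : IsColumnPattern l (default : Fin 0 → Finset (Fin c)) ↔ l = 0 := by
      simp [IsColumnPattern, antitone_const, funext_iff, eq_comm]
    simp only [Finset.univ_eq_empty, Finset.prod_empty]
    exact if_congr this.symm rfl rfl
  | succ n ih =>
    rw [dualJacobiTrudi_snoc,
      ← (Fin.snocEquiv (fun _ : Fin (n + 1) => Finset (Fin c))).sum_comp, Fintype.sum_prod_type]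
    refine Finset.sum_congr rfl fun s _ => ?_
    have hsum : ∀ w : Fin n → Finset (Fin c),
        (if IsColumnPattern l (Fin.snocEquiv (fun _ : Fin (n + 1) => Finset (Fin c)) (s, w)) then
          ∏ k, y k ^ (Fin.snocEquiv (fun _ : Fin (n + 1) => Finset (Fin c)) (s, w) k).card
          else 0) = y (Fin.last n) ^ s.card *
        if IsColumnPattern (fun j => l j - if j ∈ s then 1 else 0) w then
          ∏ k : Fin n, y k.castSucc ^ (w k).card else 0 := by
      intro w
      rw [mul_ite, mul_zero]
      refine if_congr (isColumnPattern_snoc hl w s) ?_ rfl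
      rw [Fin.prod_univ_castSucc, mul_comm]
      simp [Fin.snocEquiv]
    rw [Finset.sum_congr rfl fun w _ => hsum w, ← Finset.mul_sum]
    congr 1
    by_cases hs : Antitone fun j => l j - if j ∈ s then 1 else 0
    · exact ih _ hs
    · rw [dualJacobiTrudi_eq_zero _ hl s hs]
      exact (Finset.sum_eq_zero fun w _ => if_neg fun h => hs h.antitone).symm

open Classical in
/-- Rectangular semistandard tableaux correspond to column patterns. -/
theorem sum_isColumnPattern_eq_sum_isRectSSYT (a b c : ℕ) (y : Fin (a + b) → ℂ) :
    (∑ w : Fin (a + b) → Finset (Fin c),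
      if IsColumnPattern (fun _ => (b : ℤ)) w then ∏ k, y k ^ (w k).card else 0) =
    ∑ T ∈ Finset.univ.filter (fun T : Fin b → Fin c → Fin (a + b) => IsRectSSYT a b c T),
      ∏ i : Fin b, ∏ j : Fin c, y (T i j) := by
  rw [← Finset.sum_filter]
  symm
  have hcol : ∀ T : Fin b → Fin c → Fin (a + b), IsRectSSYT a b c T → ∀ j,
      StrictMono fun i => T i j := fun T hT j i i' hi => hT.2 i i' j hi
  refine Finset.sum_bij (fun T _ k => Finset.univ.filter fun j => ∃ i, T i j = k) ?_ ?_ ?_ ?_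
  · intro T hT
    have hT := (Finset.mem_filter.mp hT).2
    have hcard (j : Fin c) (m : ℕ) : (Finset.univ.filter fun k : Fin (a + b) =>
        (k : ℕ) < m ∧ ∃ i, T i j = k).card =
        (Finset.univ.filter fun i => (T i j : ℕ) < m).card := by
      rw [← Finset.card_image_of_injective _ (hcol T hT j).injective]
      congr 1
      ext k
      simp only [Finset.mem_filter, Finset.mem_univ, true_and, Finset.mem_image]
      constructor
      · rintro ⟨hk, i, rfl⟩; exact ⟨i, hk, rfl⟩
      · rintro ⟨i, hk, rfl⟩; exact ⟨hk, i, rfl⟩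
    simp only [Finset.mem_filter, Finset.mem_univ, true_and]
    refine ⟨fun j => ?_, fun m j j' hj => ?_⟩
    · have := hcard j (a + b)
      simpa using this
    · simp only [Finset.mem_filter, Finset.mem_univ, true_and]
      rw [hcard, hcard]
      refine Finset.card_le_card fun i hi => ?_
      simp only [Finset.mem_filter, Finset.mem_univ, true_and] at hi ⊢
      exact lt_of_le_of_lt (hT.1 i j j' hj) hi
  · intro T hT T' hT' h
    have hT := (Finset.mem_filter.mp hT).2
    have hT' := (Finset.mem_filter.mp hT').2
    have hcols : ∀ j, (fun i => T i j) = fun i => T' i j := by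
      intro j
      refine ((hcol T hT j).range_inj (hcol T' hT' j)).mp ?_
      ext k
      simpa using Finset.ext_iff.mp (congrFun h k) j
    funext i j
    exact congrFun (hcols j) i
  · intro w hw
    have hw := (Finset.mem_filter.mp hw).2
    have hS (j : Fin c) : (Finset.univ.filter fun k => j ∈ w k).card = b := by
      have := hw.1 j
      dsimp only at this
      exact_mod_cast this
    set e := fun j => (Finset.univ.filter fun k => j ∈ w k).orderEmbOfFin (hS j) with he
    have hmem (j : Fin c) (k : Fin (a + b)) : (∃ i, e j i = k) ↔ j ∈ w k := by
      have := Finset.range_orderEmbOfFin _ (hS j)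
      rw [← Set.mem_range, he, this]
      simp
    refine ⟨fun i j => e j i, ?_, ?_⟩
    · simp only [Finset.mem_filter, Finset.mem_univ, true_and]
      refine ⟨fun i j j' hj => ?_, fun i i' j hi => (e j).strictMono hi⟩
      by_contra! hlt
      have hcount (j : Fin c) (m : ℕ) : (Finset.univ.filter fun k : Fin (a + b) =>
          (k : ℕ) < m ∧ j ∈ w k).card =
          (Finset.univ.filter fun i => (e j i : ℕ) < m).card := by
        rw [← Finset.card_image_of_injective _ (e j).injective]
        congr 1
        ext k
        simp only [Finset.mem_filter, Finset.mem_univ, true_and, Finset.mem_image, ← hmem]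
        constructor
        · rintro ⟨hk, i, rfl⟩; exact ⟨i, hk, rfl⟩
        · rintro ⟨i, hk, rfl⟩; exact ⟨hk, i, rfl⟩
      have h := hw.2 (e j i) hj
      simp only [hcount] at h
      have h1 : (Finset.univ.filter fun i' => (e j i' : ℕ) < e j i) = Finset.Iio i := by
        ext i'
        simp
      have h2 : Finset.Iic i ⊆ Finset.univ.filter fun i' => (e j' i' : ℕ) < e j i := by
        intro i' hi'
        simp only [Finset.mem_filter, Finset.mem_univ, true_and, ← Fin.lt_def]
        exact lt_of_le_of_lt ((e j').monotone (Finset.mem_Iic.mp hi')) hlt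
      have h3 := Finset.card_le_card h2
      rw [h1, Fin.card_Iio] at h
      rw [Fin.card_Iic] at h3
      omega
    · funext k
      ext j
      simp [hmem]
  · intro T hT
    have hT := (Finset.mem_filter.mp hT).2
    simp_rw [← Finset.prod_const, Finset.prod_filter]
    rw [Finset.prod_comm, Finset.prod_comm (s := (Finset.univ : Finset (Fin (a + b))))]
    refine Finset.prod_congr rfl fun j _ => ?_
    rw [← Finset.prod_filter, ← Finset.prod_image (s := Finset.univ) (g := fun i => T i j)
      (f := y) ((hcol T hT j).injective.injOn)]
    refine Finset.prod_congr ?_ fun _ _ => rfl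
    ext k
    simp

/-- The symmetrizing sum over `c`-subsets of nodes shrinking to `0` tends to a Toeplitz
determinant. -/
theorem tendsto_sum_powersetCard (b c : ℕ) (τ : Fin (b + c) → ℂ) (hτ : Function.Injective τ)
    (h : ℂ[X]) :
    Tendsto (fun s : ℂ => ∑ I ∈ Finset.powersetCard c (Finset.univ : Finset (Fin (b + c))),
        (∏ i ∈ I, h.eval (s * τ i)) / ∏ i ∈ I, ∏ j ∈ Iᶜ, (s * τ i - s * τ j))
      (𝓝[≠] 0) (𝓝 (Matrix.of fun p q : Fin c => intCoeff h ((b : ℤ) - p + q)).det) := by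
  have hlim : Tendsto (fun s : ℂ => (Matrix.of fun p q : Fin c =>
      ∑ i, (X ^ ((p : ℕ) + q.rev) * h).eval (s * τ i) /
        ∏ j ∈ Finset.univ.erase i, (s * τ i - s * τ j)).det) (𝓝[≠] 0)
      (𝓝 (Matrix.of fun p q : Fin c => intCoeff h ((b : ℤ) - p + q)).det) := by
    refine ((continuous_id.matrix_det).tendsto _).comp ?_
    refine tendsto_pi_nhds.mpr fun p => tendsto_pi_nhds.mpr fun q => ?_
    have hp := p.isLt
    have hq := q.isLt
    have := tendsto_sum_eval_div_prod (b + c) (by omega) τ hτ (X ^ ((p : ℕ) + q.rev) * h)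
    rw [coeff_X_pow_mul_eq_intCoeff] at this
    have hindex : ((b + c - 1 : ℕ) : ℤ) - ((p : ℕ) + (q.rev : ℕ) : ℕ) = b - p + q := by
      rw [Fin.val_rev]
      omega
    rw [hindex] at this
    exact this
  refine hlim.congr' ?_
  filter_upwards [self_mem_nhdsWithin] with s hs
  set t : Fin (b + c) → ℂ := fun i => s * τ i with ht
  have htinj : Function.Injective t := fun i j hij => hτ (mul_left_cancel₀ hs hij)
  set g : Fin (b + c) → ℂ := fun i =>
    h.eval (t i) / ∏ j ∈ Finset.univ.erase i, (t i - t j) with hg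
  rw [← det_sum_mul_eq_sum_powersetCard (fun i p => g i * t i ^ (p : ℕ))
    (fun i q => t i ^ (q.rev : ℕ))]
  · congr 1
    ext p q
    simp only [Matrix.of_apply]
    refine Finset.sum_congr rfl fun i _ => ?_
    rw [eval_mul, eval_pow, eval_X, pow_add, hg]
    ring
  · intro φ hφ
    have h1 : (Matrix.of fun p q : Fin c => g (φ p) * t (φ p) ^ (q : ℕ)).det =
        (∏ p, g (φ p)) * ∏ i, ∏ j ∈ Finset.Ioi i, (t (φ j) - t (φ i)) := by
      rw [← Matrix.det_vandermonde, ← Matrix.det_mul_column]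
      rfl
    have h2 : (Matrix.of fun p q : Fin c => t (φ p) ^ (q.rev : ℕ)).det =
        ∏ i, ∏ j ∈ Finset.Ioi i, (t (φ i) - t (φ j)) := by
      have := Matrix.det_projVandermonde (n := c) 1 (fun p => t (φ p))
      simp only [Pi.one_apply, one_mul] at this
      rw [← this]
      congr 1
      ext p q
      simp [Matrix.projVandermonde_apply]
    have h3 : (∏ i, ∏ j ∈ Finset.Ioi i, (t (φ j) - t (φ i))) *
        (∏ i, ∏ j ∈ Finset.Ioi i, (t (φ i) - t (φ j))) =
        ∏ i ∈ Finset.univ.image φ, ∏ j ∈ (Finset.univ.image φ).erase i, (t i - t j) := by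
      rw [← Finset.prod_mul_distrib]
      simp_rw [← Finset.prod_mul_distrib]
      rw [Finset.prod_prod_Ioi_mul_eq_prod_prod_off_diag (fun p q => t (φ p) - t (φ q)),
        Finset.prod_image hφ.injOn, Finset.prod_comm' (t' := Finset.univ) (s' := fun i => {i}ᶜ)
          (by intro x y; simp [eq_comm])]
      refine Finset.prod_congr rfl fun p _ => ?_
      rw [← Finset.image_erase hφ, Finset.prod_image hφ.injOn, Finset.compl_singleton]
    set I := Finset.univ.image φ
    have h4 : ∏ p, g (φ p) = ∏ i ∈ I, g i := (Finset.prod_image hφ.injOn).symm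
    have hne : ∏ i ∈ I, ∏ j ∈ I.erase i, (t i - t j) ≠ 0 :=
      Finset.prod_ne_zero_iff.mpr fun i _ => Finset.prod_ne_zero_iff.mpr fun j hj =>
        sub_ne_zero.mpr fun h => (Finset.ne_of_mem_erase hj) (htinj h).symm
    have h5 : ∏ i ∈ I, g i = (∏ i ∈ I, h.eval (t i)) /
        ((∏ i ∈ I, ∏ j ∈ I.erase i, (t i - t j)) * ∏ i ∈ I, ∏ j ∈ Iᶜ, (t i - t j)) := by
      rw [hg, Finset.prod_div_distrib, ← Finset.prod_mul_distrib]
      congr 1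
      refine Finset.prod_congr rfl fun i hi => ?_
      rw [← Finset.prod_union]
      · refine Finset.prod_congr ?_ fun _ _ => rfl
        ext j
        by_cases hj : j ∈ I
        · simp [hj]
        · simp only [Finset.mem_erase, Finset.mem_univ, Finset.mem_union, hj, Finset.mem_compl]
          simp only [and_true, and_false, false_or, not_false_eq_true, iff_true]
          rintro rfl
          exact hj hi
      · exact Finset.disjoint_left.mpr fun j hj hj' =>
          Finset.mem_compl.mp hj' (Finset.mem_of_mem_erase hj)
    rw [h1, h2, mul_assoc, h3, h4, h5, div_mul_eq_mul_div, mul_comm (∏ i ∈ I, h.eval (t i)),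
      mul_div_mul_left _ _ hne]

/-- `Phi` in a coordinate which turns both one-parameter families of factors into a Schur-type
generating function. -/
theorem Phi_moebius (a b c : ℕ) (α β : ℂ) (γ : Fin (a + b) → ℂ) (hαβ : α ≠ β)
    (hγ : ∀ k, α ≠ γ k) (t : Fin (b + c) → ℂ) (ht : ∀ i, 1 - t i ≠ 0) :
    Phi a b c (fun i => α + (α - β) * (t i / (1 - t i))) (fun _ => β) γ =
      ((α - β) ^ (a * b) * (∏ k, (α - γ k) ^ c)) * (((∏ i, (1 - t i)) ^ a)⁻¹ *
        ∑ I ∈ Finset.powersetCard c (Finset.univ : Finset (Fin (b + c))),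
          (∏ i ∈ I, (elemGen fun k => (γ k - β) / (α - γ k)).eval (t i)) /
            ∏ i ∈ I, ∏ j ∈ Iᶜ, (t i - t j)) := by
  have hu : α - β ≠ 0 := sub_ne_zero.mpr hαβ
  have hv : ∀ k, α - γ k ≠ 0 := fun k => sub_ne_zero.mpr (hγ k)
  set u := α - β with hudef
  have e1 : ∀ i, α + u * (t i / (1 - t i)) - β = u / (1 - t i) := fun i => by
    have := ht i
    field_simp
    rw [hudef]; ring
  have e2 : ∀ i, ∏ k, (α + u * (t i / (1 - t i)) - γ k) = (∏ k, (α - γ k)) *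
      (elemGen fun k => (γ k - β) / (α - γ k)).eval (t i) / (1 - t i) ^ (a + b) := fun i => by
    have hpow : (1 - t i) ^ (a + b) = ∏ _k : Fin (a + b), (1 - t i) := by simp
    rw [elemGen, eval_prod, hpow, ← Finset.prod_mul_distrib, ← Finset.prod_div_distrib]
    refine Finset.prod_congr rfl fun k _ => ?_
    have := ht i
    have := hv k
    simp only [eval_add, eval_one, eval_mul, eval_C, eval_X]
    field_simp
    rw [hudef]; ring
  have e3 : ∀ i j, α + u * (t i / (1 - t i)) - (α + u * (t j / (1 - t j))) =
      u * (t i - t j) / ((1 - t i) * (1 - t j)) := fun i j => by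
    have := ht i
    have := ht j
    field_simp
    ring
  rw [Phi, Finset.mul_sum, Finset.mul_sum]
  refine Finset.sum_congr rfl fun I hI => ?_
  have hc : I.card = c := (Finset.mem_powersetCard.mp hI).2
  have hb : Iᶜ.card = b := by rw [Finset.card_compl, hc]; simp
  simp only [e1, e2, e3]
  have f1 : ∏ i ∈ Iᶜ, ∏ _j : Fin (a + c), u / (1 - t i) =
      u ^ ((a + c) * b) / (∏ i ∈ Iᶜ, (1 - t i)) ^ (a + c) := by
    simp only [Finset.prod_const, Finset.card_univ, Fintype.card_fin]
    rw [Finset.prod_pow, Finset.prod_div_distrib, Finset.prod_const, hb, div_pow, ← pow_mul,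
      mul_comm b]
  have f2 : ∏ i ∈ I, ((∏ k, (α - γ k)) *
      (elemGen fun k => (γ k - β) / (α - γ k)).eval (t i) / (1 - t i) ^ (a + b)) =
      (∏ k, (α - γ k)) ^ c * (∏ i ∈ I, (elemGen fun k => (γ k - β) / (α - γ k)).eval (t i)) /
        (∏ i ∈ I, (1 - t i)) ^ (a + b) := by
    rw [Finset.prod_div_distrib, Finset.prod_mul_distrib, Finset.prod_const, hc, Finset.prod_pow]
  have f3 : ∏ i ∈ I, ∏ j ∈ Iᶜ, u * (t i - t j) / ((1 - t i) * (1 - t j)) =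
      u ^ (b * c) * (∏ i ∈ I, ∏ j ∈ Iᶜ, (t i - t j)) /
        ((∏ i ∈ I, (1 - t i)) ^ b * (∏ i ∈ Iᶜ, (1 - t i)) ^ c) := by
    simp only [Finset.prod_div_distrib, Finset.prod_mul_distrib, Finset.prod_const, hc, hb,
      Finset.prod_pow, ← pow_mul]
  rw [f1, f2, f3, Finset.prod_pow, ← Finset.prod_mul_prod_compl I (fun i => 1 - t i)]
  have hA : ∏ i ∈ I, (1 - t i) ≠ 0 := Finset.prod_ne_zero_iff.mpr fun i _ => ht i
  have hB : ∏ i ∈ Iᶜ, (1 - t i) ≠ 0 := Finset.prod_ne_zero_iff.mpr fun i _ => ht i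
  generalize ∏ i ∈ I, (1 - t i) = A at *
  generalize ∏ i ∈ Iᶜ, (1 - t i) = B at *
  generalize ∏ i ∈ I, ∏ j ∈ Iᶜ, (t i - t j) = D
  have hexp : u ^ ((a + c) * b) = u ^ (a * b) * u ^ (b * c) := by rw [← pow_add]; congr 1; ring
  rw [hexp, pow_add, pow_add, mul_pow]
  field_simp

theorem IsPolyFun.continuousAt {a b c : ℕ}
    {P : (Fin (b + c) → ℂ) → (Fin (a + c) → ℂ) → (Fin (a + b) → ℂ) → ℂ} (hP : IsPolyFun a b c P)
    {x : ℂ → Fin (b + c) → ℂ} {y : ℂ → Fin (a + c) → ℂ} {γ : Fin (a + b) → ℂ} {z : ℂ}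
    (hx : ContinuousAt x z) (hy : ContinuousAt y z) :
    ContinuousAt (fun s => P (x s) (y s) γ) z := by
  obtain ⟨p, hp⟩ := hP
  simp only [hp]
  refine (MvPolynomial.continuous_eval p).continuousAt.comp ?_
  refine continuousAt_pi.mpr ?_
  rintro (i | j | k)
  · exact continuousAt_pi.mp hx i
  · exact continuousAt_pi.mp hy j
  · exact continuousAt_const

/-- The Schur-function formula away from the locus `α = β`. -/
theorem Phi_schur_formula_of_ne (a b c : ℕ)
    (P : (Fin (b + c) → ℂ) → (Fin (a + c) → ℂ) → (Fin (a + b) → ℂ) → ℂ)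
    (hP : IsPolyFun a b c P)
    (hagree : ∀ α β γ, Function.Injective α → P α β γ = Phi a b c α β γ)
    (α β : ℂ) (γ : Fin (a + b) → ℂ) (hαβ : α ≠ β) (hγ : ∀ k, α ≠ γ k) :
    P (fun _ => α) (fun _ => β) γ =
      (α - β) ^ (a * b) * (∏ k, (α - γ k) ^ c) *
        ∑ T ∈ Finset.univ.filter (fun T : Fin b → Fin c → Fin (a + b) => IsRectSSYT a b c T),
          ∏ i : Fin b, ∏ j : Fin c, (γ (T i j) - β) / (α - γ (T i j)) := by
  set τ : Fin (b + c) → ℂ := fun i => (i : ℕ) with hτdef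
  have hτ : Function.Injective τ := fun i j h => Fin.ext (Nat.cast_injective h)
  set y : Fin (a + b) → ℂ := fun k => (γ k - β) / (α - γ k) with hy
  set x : ℂ → Fin (b + c) → ℂ :=
    fun s i => α + (α - β) * (s * τ i / (1 - s * τ i)) with hx
  have hcont : ContinuousAt x 0 := by
    refine continuousAt_pi.mpr fun i => ?_
    refine continuousAt_const.add (continuousAt_const.mul (ContinuousAt.div ?_ ?_ (by simp)))
    all_goals fun_prop
  have hlim1 : Tendsto (fun s => P (x s) (fun _ => β) γ) (𝓝[≠] 0)
      (𝓝 (P (fun _ => α) (fun _ => β) γ)) := by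
    have := (hP.continuousAt (γ := γ) hcont
      (continuousAt_const (y := fun _ => β))).tendsto
    have h0 : x 0 = fun _ => α := by funext i; simp [hx]
    rw [h0] at this
    exact this.mono_left nhdsWithin_le_nhds
  have hev : ∀ᶠ s in 𝓝[≠] (0 : ℂ), ∀ i, 1 - s * τ i ≠ 0 := by
    refine nhdsWithin_le_nhds (eventually_all.mpr fun i => ?_)
    have : ContinuousAt (fun s : ℂ => 1 - s * τ i) 0 := by fun_prop
    exact this.eventually_ne (by simp)
  have hlim2 : Tendsto (fun s => P (x s) (fun _ => β) γ) (𝓝[≠] 0)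
      (𝓝 ((α - β) ^ (a * b) * (∏ k, (α - γ k) ^ c) *
        (1 * (Matrix.of fun p q : Fin c => intCoeff (elemGen y) ((b : ℤ) - p + q)).det))) := by
    have hprod : Tendsto (fun s : ℂ => ((∏ i, (1 - s * τ i)) ^ a)⁻¹) (𝓝[≠] 0) (𝓝 1) := by
      refine Tendsto.mono_left ?_ nhdsWithin_le_nhds
      have : ContinuousAt (fun s : ℂ => ((∏ i, (1 - s * τ i)) ^ a)⁻¹) 0 :=
        ContinuousAt.inv₀ (by fun_prop) (by simp)
      simpa [ContinuousAt] using this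
    refine ((hprod.mul (tendsto_sum_powersetCard b c τ hτ (elemGen y))).const_mul _).congr' ?_
    filter_upwards [hev, self_mem_nhdsWithin] with s hs hs0
    rw [hagree, hx, Phi_moebius a b c α β γ hαβ hγ _ hs]
    intro i j hij
    have hi := hs i
    have hj := hs j
    have h1 : s * τ i / (1 - s * τ i) = s * τ j / (1 - s * τ j) :=
      mul_left_cancel₀ (sub_ne_zero.mpr hαβ) (add_left_cancel hij)
    rw [div_eq_div_iff hi hj] at h1
    exact hτ (mul_left_cancel₀ hs0 (by linear_combination h1))
  rw [tendsto_nhds_unique hlim1 hlim2, one_mul]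
  congr 1
  rw [← sum_isColumnPattern_eq_sum_isRectSSYT a b c y,
    ← dualJacobiTrudi_eq_sum y (antitone_const (c := (b : ℤ)))]
  rfl

/-- The Schur-function formula, Eq. (4.3) of the paper: with all `α_i = α` and all
`β_j = β`, any polynomial extension `P` of `Φ_{a,b,c}` evaluates to
`(α - β)^{ab} · ∏_k (α - γ_k)^c` times the Schur polynomial of the rectangular partition
`(c^b)` at the numbers `(γ_k - β)/(α - γ_k)`, written as a sum over semistandard Young
tableaux of rectangular shape `b × c` with entries in `{1, …, a+b}`. -/
theorem Phi_schur_formula (a b c : ℕ)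
    (P : (Fin (b + c) → ℂ) → (Fin (a + c) → ℂ) → (Fin (a + b) → ℂ) → ℂ)
    (hP : IsPolyFun a b c P)
    (hagree : ∀ α β γ, Function.Injective α → P α β γ = Phi a b c α β γ)
    (α β : ℂ) (γ : Fin (a + b) → ℂ) (hγ : ∀ k, α ≠ γ k) :
    P (fun _ => α) (fun _ => β) γ =
      (α - β) ^ (a * b) * (∏ k, (α - γ k) ^ c) *
        ∑ T ∈ Finset.univ.filter (fun T : Fin b → Fin c → Fin (a + b) => IsRectSSYT a b c T),
          ∏ i : Fin b, ∏ j : Fin c, (γ (T i j) - β) / (α - γ (T i j)) := by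
  have hcont : Continuous fun β : ℂ => P (fun _ => α) (fun _ => β) γ :=
    continuous_iff_continuousAt.mpr fun z =>
      hP.continuousAt continuousAt_const (continuous_pi fun _ => continuous_id).continuousAt
  have hcont' : Continuous fun β : ℂ => (α - β) ^ (a * b) * (∏ k, (α - γ k) ^ c) *
      ∑ T ∈ Finset.univ.filter (fun T : Fin b → Fin c → Fin (a + b) => IsRectSSYT a b c T),
        ∏ i : Fin b, ∏ j : Fin c, (γ (T i j) - β) / (α - γ (T i j)) := by
    fun_prop
  exact congrFun (Continuous.ext_on (dense_compl_singleton α) hcont hcont' fun z hz =>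
    Phi_schur_formula_of_ne a b c P hP hagree α z γ (Ne.symm hz) hγ) β
end
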